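/- Let n = 3^{k₁} + 3^{k₂} + 3^{k₃} with integers k₁ > k₂ > k₃ ≥ 0. Let Lₙ = ℚ(x₁, …, xₙ) be the field of rational functions in n independent variables over ℚ, let Fₙ = Lₙ^{Sₙ} be the fixed field of the symmetric group Sₙ acting by permuting x₁, …, xₙ, and let Eₙ = Lₙ^{Sₙ₋₁} = Fₙ(x₁) be the fixed field of the subgroup Sₙ₋₁ permuting only x₂, …, xₙ (so [Eₙ : Fₙ] = n). Then there does not exist a nonzero δ ∈ Eₙ with Tr_{Eₙ/Fₙ}(δ) = 0 and Tr_{Eₙ/Fₙ}(δ³) = 0. -/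

import Mathlib

noncomputable section

namespace GenExt

/-- `Lₙ = ℚ(x₁, …, xₙ)`, the field of rational functions in `n` variables over `ℚ`. -/
def L (n : ℕ) : Type := FractionRing (MvPolynomial (Fin n) ℚ)

noncomputable instance (n : ℕ) : Field (L n) :=
  inferInstanceAs (Field (FractionRing (MvPolynomial (Fin n) ℚ)))

noncomputable instance (n : ℕ) : Algebra (MvPolynomial (Fin n) ℚ) (L n) :=
  inferInstanceAs (Algebra (MvPolynomial (Fin n) ℚ) (FractionRing (MvPolynomial (Fin n) ℚ)))

instance (n : ℕ) : IsFractionRing (MvPolynomial (Fin n) ℚ) (L n) :=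
  inferInstanceAs
    (IsFractionRing (MvPolynomial (Fin n) ℚ) (FractionRing (MvPolynomial (Fin n) ℚ)))

/-- The automorphism of `Lₙ` induced by a permutation `σ ∈ Sₙ` of the variables
`x₁, …, xₙ`. -/
noncomputable def permAut (n : ℕ) (σ : Equiv.Perm (Fin n)) : L n ≃+* L n :=
  IsFractionRing.ringEquivOfRingEquiv (MvPolynomial.renameEquiv ℚ σ).toRingEquiv

/-- The subfield of `Lₙ` consisting of elements fixed by all permutations in `S`. -/
noncomputable def fixedSubfield (n : ℕ) (S : Set (Equiv.Perm (Fin n))) : Subfield (L n) where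
  carrier := {a | ∀ σ ∈ S, permAut n σ a = a}
  mul_mem' := fun ha hb σ hσ => by rw [map_mul, ha σ hσ, hb σ hσ]
  one_mem' := fun σ _ => map_one _
  add_mem' := fun ha hb σ hσ => by rw [map_add, ha σ hσ, hb σ hσ]
  zero_mem' := fun σ _ => map_zero _
  neg_mem' := fun ha σ hσ => by rw [map_neg, ha σ hσ]
  inv_mem' := fun a ha σ hσ => by rw [map_inv₀, ha σ hσ]

/-- `Fₙ = Lₙ^{Sₙ}`, the fixed field of the full symmetric group. -/
noncomputable def F (n : ℕ) : Subfield (L n) := fixedSubfield n Set.univ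

/-- `Eₙ = Lₙ^{Sₙ₋₁}`, the fixed field of the subgroup of permutations fixing `x₁`
(i.e. permuting only `x₂, …, xₙ`). -/
noncomputable def E (n : ℕ) : Subfield (L n) :=
  fixedSubfield n {σ | ∀ i : Fin n, (i : ℕ) = 0 → σ i = i}

theorem F_le_E (n : ℕ) : F n ≤ E n := fun _ ha σ _ => ha σ (Set.mem_univ σ)

/-- `Eₙ` is an `Fₙ`-algebra via the inclusion `Fₙ ⊆ Eₙ`. -/
noncomputable instance (n : ℕ) : Algebra (F n) (E n) :=
  (Subfield.inclusion (F_le_E n)).toAlgebra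

end GenExt

section
namespace HJ
open Finset

/-- numerator product -/
def pz (a : ℤ) (i : ℕ) : ℤ := 3 ^ i * ∏ l ∈ range i, (3 * (l : ℤ) - a)

lemma pz_succ (a : ℤ) (i : ℕ) : pz a (i + 1) = 3 * (3 * (i : ℤ) - a) * pz a i := by
  simp only [pz, prod_range_succ, pow_succ]; ring

lemma fact_dvd_prod (x : ℤ) (i : ℕ) : ((i.factorial : ℕ) : ℤ) ∣ ∏ l ∈ range i, ((l : ℤ) - x) := by
  have h := Ring.descPochhammer_eq_factorial_smul_choose x i
  rw [← Polynomial.eval_eq_smeval, descPochhammer_eval_eq_prod_range] at h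
  have h2 : ∏ l ∈ range i, ((l : ℤ) - x) = (-1) ^ i * ∏ l ∈ range i, (x - (l : ℤ)) := by
    rw [← card_range i, ← prod_const, card_range, ← prod_mul_distrib]
    exact prod_congr rfl (fun l _ => by ring)
  rw [h2, h]
  exact Dvd.dvd.mul_left (by simp [nsmul_eq_mul]) _

lemma fact_dvd_pz (a : ℤ) (i : ℕ) : ((i.factorial : ℕ) : ℤ) ∣ pz a i := by
  obtain ⟨v, m, hm, hv⟩ := Nat.exists_eq_pow_mul_and_not_dvd (Nat.factorial_ne_zero i) 3 (by norm_num)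
  have hcop : Nat.Coprime 3 m := (Nat.Prime.coprime_iff_not_dvd Nat.prime_three).2 hm
  have hvi : v ≤ i := by
    have h1 : (3:ℕ) ^ v ∣ i.factorial := by rw [hv]; exact Dvd.intro _ rfl
    have h2 := (Nat.Prime.pow_dvd_factorial_iff Nat.prime_three (n := i) (b := i + 1) (r := v) (by
      exact lt_of_le_of_lt (Nat.log_le_self 3 i) (Nat.lt_succ_self i))).1 h1
    have h3 : v ≤ padicValNat 3 i.factorial := by
      exact (padicValNat_dvd_iff_le (Nat.factorial_ne_zero i)).1 h1
    have := @sub_one_mul_padicValNat_factorial 3 ⟨Nat.prime_three⟩ i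
    omega
  have hic : IsCoprime (3 : ℤ) (m : ℤ) := by
    have := Nat.isCoprime_iff_coprime.2 hcop
    exact_mod_cast this
  obtain ⟨c, c', hcc⟩ := id hic
  have hmd : (m : ℤ) ∣ ∏ l ∈ range i, (3 * (l : ℤ) - a) := by
    have h1 : (∏ l ∈ range i, (3 * (l : ℤ) - a)) ≡ 3 ^ i * ∏ l ∈ range i, ((l : ℤ) - c * a) [ZMOD m] := by
      have : (3:ℤ) ^ i * ∏ l ∈ range i, ((l : ℤ) - c * a) = ∏ l ∈ range i, (3 * ((l : ℤ) - c * a)) := by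
        rw [prod_mul_distrib]; simp
      rw [this]
      apply Int.ModEq.prod
      intro l _
      rw [Int.modEq_iff_dvd]
      refine ⟨a * c', ?_⟩
      linear_combination -a * hcc
    have h2 : (m : ℤ) ∣ 3 ^ i * ∏ l ∈ range i, ((l : ℤ) - c * a) := by
      apply Dvd.dvd.mul_left
      refine dvd_trans ?_ (fact_dvd_prod (c * a) i)
      exact_mod_cast (Dvd.intro_left _ hv.symm)
    exact (Int.ModEq.dvd_iff h1).2 h2
  rw [hv, pz]
  push_cast
  exact mul_dvd_mul (pow_dvd_pow _ hvi) hmd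

/-- the integer coefficients -/
def cz (a : ℤ) (i : ℕ) : ℤ := pz a i / (i.factorial : ℤ)

lemma cz_mul (a : ℤ) (i : ℕ) : (i.factorial : ℤ) * cz a i = pz a i :=
  Int.mul_ediv_cancel' (fact_dvd_pz a i)

lemma cz_zero (a : ℤ) : cz a 0 = 1 := by simp [cz, pz]

lemma cz_succ (a : ℤ) (i : ℕ) : ((i : ℤ) + 1) * cz a (i + 1) = 3 * (3 * (i : ℤ) - a) * cz a i := by
  have h1 := cz_mul a (i + 1)
  have h2 := cz_mul a i
  have h0 : (i.factorial : ℤ) ≠ 0 := by exact_mod_cast Nat.factorial_ne_zero i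
  rw [pz_succ, Nat.factorial_succ] at h1
  push_cast at h1
  apply mul_left_cancel₀ h0
  linear_combination h1 - 3 * (3 * (i : ℤ) - a) * h2

lemma cz_ne_zero (a : ℤ) (ha : ¬ (3:ℤ) ∣ a) (i : ℕ) : cz a i ≠ 0 := by
  induction i with
  | zero => simp [cz_zero]
  | succ i ih =>
    intro h
    have := cz_succ a i
    rw [h, mul_zero] at this
    have h3 : (3 * (i : ℤ) - a) ≠ 0 := by intro h; apply ha; exact ⟨i, by linarith⟩
    exact (mul_ne_zero (mul_ne_zero (by norm_num) h3) ih) this.symm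

open PowerSeries in
/-- the cube-root-like series -/
def Th : PowerSeries ℤ := PowerSeries.mk (cz 2)

open PowerSeries in
lemma Th_ode : (1 - 9 * X) * (d⁄dX ℤ) Th = - 6 * Th := by
  ext s
  have := cz_succ 2 s
  have e : (1 - 9 * X) * (d⁄dX ℤ) Th = (d⁄dX ℤ) Th - C (9:ℤ) * (X * (d⁄dX ℤ) Th) := by
    rw [show (C (9:ℤ) : PowerSeries ℤ) = 9 from by simp]; ring
  have e2 : - 6 * Th = C (-6:ℤ) * Th := by simp
  rw [e, e2, map_sub, coeff_C_mul, coeff_C_mul]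
  cases s with
  | zero => simp [Th, coeff_derivative] at *; linarith
  | succ s =>
    rw [coeff_succ_X_mul]
    simp only [Th, coeff_derivative, coeff_mk] at *
    push_cast at *
    linarith

/-- denominators -/
def qc (j k i : ℕ) : ℤ := cz (3 * (k : ℤ) - 2) i * ((j + k - i).choose k : ℤ)
/-- numerators -/
def pc (j k i : ℕ) : ℤ := cz (3 * (j : ℤ) + 2) i * ((j + k - i).choose j : ℤ)

lemma qc_zero_of_gt (j k i : ℕ) (hk : 1 ≤ k) (h : j < i) : qc j k i = 0 := by
  rw [qc, Nat.choose_eq_zero_of_lt (by omega)]; simp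

lemma pc_zero_of_gt (j k i : ℕ) (hj : 1 ≤ j) (h : k < i) : pc j k i = 0 := by
  rw [pc, Nat.choose_eq_zero_of_lt (by omega)]; simp

lemma qc_rec (j k s : ℕ) (hk : 1 ≤ k) :
    ((s : ℤ) + 1) * ((s : ℤ) - j - k) * qc j k (s + 1)
      = 3 * (3 * (s : ℤ) - (3 * (k : ℤ) - 2)) * ((s : ℤ) - j) * qc j k s := by
  rcases lt_trichotomy s j with h | h | h
  · obtain ⟨r, rfl⟩ : ∃ r, j = s + 1 + r := ⟨j - s - 1, by omega⟩
    have h1 := cz_succ (3 * (k : ℤ) - 2) s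
    have e1 : s + 1 + r + k - (s + 1) = r + k := by omega
    have e2 : s + 1 + r + k - s = r + k + 1 := by omega
    rw [qc, qc, e1, e2]
    have h2 := Nat.choose_mul_succ_eq (r + k) k
    have e3 : r + k + 1 - k = r + 1 := by omega
    rw [e3] at h2
    zify at h2
    push_cast at *
    linear_combination (-(r:ℤ) - 1 - k) * ((r + k).choose k : ℤ) * h1
      - 3 * (3 * (s : ℤ) - (3 * (k : ℤ) - 2)) * cz (3 * (k : ℤ) - 2) s * h2
  · subst h
    rw [qc_zero_of_gt s k (s + 1) hk (by omega)]; ring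
  · rw [qc_zero_of_gt j k (s + 1) hk (by omega), qc_zero_of_gt j k s hk (by omega)]; ring

lemma pc_rec (j k s : ℕ) (hj : 1 ≤ j) :
    ((s : ℤ) + 1) * ((s : ℤ) - j - k) * pc j k (s + 1)
      = 3 * (3 * (s : ℤ) - (3 * (j : ℤ) + 2)) * ((s : ℤ) - k) * pc j k s := by
  rcases lt_trichotomy s k with h | h | h
  · obtain ⟨r, rfl⟩ : ∃ r, k = s + 1 + r := ⟨k - s - 1, by omega⟩
    have h1 := cz_succ (3 * (j : ℤ) + 2) s
    have e1 : j + (s + 1 + r) - (s + 1) = r + j := by omega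
    have e2 : j + (s + 1 + r) - s = r + j + 1 := by omega
    rw [pc, pc, e1, e2]
    have h2 := Nat.choose_mul_succ_eq (r + j) j
    have e3 : r + j + 1 - j = r + 1 := by omega
    rw [e3] at h2
    zify at h2
    push_cast at *
    linear_combination (-(r:ℤ) - 1 - j) * ((r + j).choose j : ℤ) * h1
      - 3 * (3 * (s : ℤ) - (3 * (j : ℤ) + 2)) * cz (3 * (j : ℤ) + 2) s * h2
  · subst h
    rw [pc_zero_of_gt j s (s + 1) hj (by omega)]; ring
  · rw [pc_zero_of_gt j k (s + 1) hj (by omega), pc_zero_of_gt j k s hj (by omega)]; ring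

open PowerSeries in
/-- the generic hypergeometric-type operator, coefficientwise -/
lemma ode_coeff (y : PowerSeries ℤ) (A B Cc : ℤ) (s : ℕ) :
    coeff s (X * (1 - 9 * X) * (d⁄dX ℤ) ((d⁄dX ℤ) y) + (C A - C B * X) * (d⁄dX ℤ) y + C Cc * y)
      = ((s : ℤ) + 1) * ((s : ℤ) + A) * coeff (s + 1) y
        - (9 * (s : ℤ) * ((s : ℤ) - 1) + B * s - Cc) * coeff s y := by
  have e : X * (1 - 9 * X) * (d⁄dX ℤ) ((d⁄dX ℤ) y) + (C A - C B * X) * (d⁄dX ℤ) y + C Cc * y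
    = X * (d⁄dX ℤ) ((d⁄dX ℤ) y) - C (9:ℤ) * (X * (X * (d⁄dX ℤ) ((d⁄dX ℤ) y)))
      + C A * (d⁄dX ℤ) y - C B * (X * (d⁄dX ℤ) y) + C Cc * y := by
    rw [show (C (9:ℤ) : PowerSeries ℤ) = 9 from by simp]; ring
  rw [e]
  simp only [map_add, map_sub, coeff_C_mul]
  rcases s with _ | _ | s
  · simp [coeff_derivative]
  · simp only [zero_add]
    have z : (coeff 0) (X * (d⁄dX ℤ) ((d⁄dX ℤ) y)) = 0 := by simp
    have z1 : (coeff 1) (X * (d⁄dX ℤ) ((d⁄dX ℤ) y)) = (coeff 0) ((d⁄dX ℤ) ((d⁄dX ℤ) y)) :=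
      coeff_succ_X_mul 0 _
    have z2 : (coeff 1) (X * (X * (d⁄dX ℤ) ((d⁄dX ℤ) y))) = (coeff 0) (X * (d⁄dX ℤ) ((d⁄dX ℤ) y)) :=
      coeff_succ_X_mul 0 _
    have z3 : (coeff 1) (X * (d⁄dX ℤ) y) = (coeff 0) ((d⁄dX ℤ) y) :=
      coeff_succ_X_mul 0 _
    rw [z2, z, z1, z3]
    simp only [coeff_derivative]
    push_cast; ring
  · simp only [coeff_succ_X_mul, coeff_derivative]
    push_cast; ring

open PowerSeries in
lemma pade_coeff (j k : ℕ) (hj : 1 ≤ j) (hk : 1 ≤ k) (s : ℕ) (hs : s ≤ j + k) :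
    coeff s (Th * PowerSeries.mk (qc j k)) = pc j k s := by
  set Q : PowerSeries ℤ := PowerSeries.mk (qc j k) with hQ
  have hQode : X * (1 - 9 * X) * (d⁄dX ℤ) ((d⁄dX ℤ) Q)
      + (C (-(j:ℤ) - k) - C (-9 * (j:ℤ) - 9 * k + 15) * X) * (d⁄dX ℤ) Q
      + C ((j:ℤ) * (6 - 9 * k)) * Q = 0 := by
    ext s
    rw [ode_coeff, hQ]
    simp only [coeff_mk, map_zero]
    have := qc_rec j k s hk
    linear_combination this
  have hT := Th_ode
  have hT2 : (1 - 9 * X) * (d⁄dX ℤ) ((d⁄dX ℤ) Th) = 3 * (d⁄dX ℤ) Th := by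
    have h := congrArg (d⁄dX ℤ) hT
    have e2 : - 6 * Th = C (-6:ℤ) * Th := by simp
    have e1 : (1 - 9 * X) * (d⁄dX ℤ) Th = (1 - C (9:ℤ) * X) * (d⁄dX ℤ) Th := by simp
    rw [e1, e2] at h
    simp only [Derivation.leibniz, map_sub, derivative_C, derivative_X, smul_eq_mul, Derivation.map_one_eq_zero] at h
    simp only [show (C (9:ℤ) : PowerSeries ℤ) = 9 from by simp, show (C (-6:ℤ) : PowerSeries ℤ) = -6 from by simp] at h
    linear_combination h
  set y := Th * Q with hy
  have hyode : X * (1 - 9 * X) * (d⁄dX ℤ) ((d⁄dX ℤ) y)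
      + (C (-(j:ℤ) - k) - C (-9 * (j:ℤ) - 9 * k + 3) * X) * (d⁄dX ℤ) y
      + C (-(k:ℤ) * (6 + 9 * j)) * y = 0 := by
    rw [hy]
    simp only [Derivation.leibniz, map_add, smul_eq_mul]
    simp only [map_sub, map_neg, map_mul, map_add, map_natCast, map_ofNat] at hQode ⊢
    linear_combination Th * hQode + X * Q * hT2 + (2 * X * (d⁄dX ℤ) Q - (j + k) * Q) * hT
  induction s with
  | zero =>
    rw [hy, hQ]
    simp [Th, qc, pc, cz_zero]
    exact Nat.choose_symm_add.symm
  | succ s ih =>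
    have h1 := congrArg (coeff s) hyode
    rw [ode_coeff, map_zero, ih (by omega)] at h1
    have h2 := pc_rec j k s hj
    have h3 : ((s : ℤ) + 1) * ((s : ℤ) - j - k) ≠ 0 := by
      apply mul_ne_zero
      · positivity
      · have : (s:ℤ) + 1 ≤ j + k := by exact_mod_cast hs
        intro h; linarith
    apply mul_left_cancel₀ h3
    linear_combination h1 - h2

open PowerSeries in
lemma Th_cube : Th ^ 3 = (1 - 9 * X) ^ 2 := by
  have hT := Th_ode
  have key : ∀ y : PowerSeries ℤ, (1 - 9 * X) * (d⁄dX ℤ) y = - 18 * y → ∀ s : ℕ,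
      ((s:ℤ) + 1) * coeff (s + 1) y = (9 * (s:ℤ) - 18) * coeff s y := by
    intro y hy s
    have e : (1 - 9 * X) * (d⁄dX ℤ) y = (d⁄dX ℤ) y - C (9:ℤ) * (X * (d⁄dX ℤ) y) := by
      rw [show (C (9:ℤ) : PowerSeries ℤ) = 9 from by simp]; ring
    have e2 : - 18 * y = C (-18:ℤ) * y := by simp
    have h := congrArg (coeff s) hy
    rw [e, e2, map_sub, coeff_C_mul, coeff_C_mul] at h
    rcases s with _ | s
    · simp [coeff_derivative] at h ⊢; linarith
    · rw [coeff_succ_X_mul] at h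
      simp only [coeff_derivative] at h
      push_cast at *
      linarith
  have k1 := key (Th ^ 3) (by
    rw [Derivation.leibniz_pow]; simp only [smul_eq_mul, nsmul_eq_mul]; push_cast
    linear_combination 3 * Th ^ 2 * hT)
  have k2 := key ((1 - 9 * X) ^ 2) (by
    have : (1 - 9 * X : PowerSeries ℤ) = 1 - C (9:ℤ) * X := by simp
    rw [Derivation.leibniz_pow, this]
    simp only [Derivation.leibniz, map_sub, derivative_C, derivative_X, smul_eq_mul, nsmul_eq_mul, Derivation.map_one_eq_zero]
    simp only [show (C (9:ℤ) : PowerSeries ℤ) = 9 from by simp]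
    push_cast; ring)
  ext s
  induction s with
  | zero => simp [Th, cz_zero]
  | succ s ih =>
    apply mul_left_cancel₀ (show ((s:ℤ) + 1) ≠ 0 by positivity)
    rw [k1, k2, ih]

end HJ
end

section
namespace HJ
open Finset

lemma coe_dvd_iff (p : Polynomial ℤ) (n : ℕ) :
    (Polynomial.X ^ n ∣ p) ↔ (PowerSeries.X ^ n ∣ (p : PowerSeries ℤ)) := by
  rw [Polynomial.X_pow_dvd_iff, PowerSeries.X_pow_dvd_iff]
  simp [Polynomial.coeff_coe]

/-- denominator polynomial -/
noncomputable def Qp (j k : ℕ) : Polynomial ℤ := PowerSeries.trunc (j + 1) (PowerSeries.mk (qc j k))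
/-- numerator polynomial -/
noncomputable def Pp (j k : ℕ) : Polynomial ℤ := PowerSeries.trunc (k + 1) (PowerSeries.mk (pc j k))
/-- truncation -/
noncomputable def Tp (n : ℕ) : Polynomial ℤ := PowerSeries.trunc n Th

lemma Qp_coeff (j k i : ℕ) (hk : 1 ≤ k) : (Qp j k).coeff i = qc j k i := by
  rw [Qp, PowerSeries.coeff_trunc, PowerSeries.coeff_mk]
  split_ifs with h
  · rfl
  · exact (qc_zero_of_gt j k i hk (by omega)).symm

lemma Pp_coeff (j k i : ℕ) (hj : 1 ≤ j) : (Pp j k).coeff i = pc j k i := by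
  rw [Pp, PowerSeries.coeff_trunc, PowerSeries.coeff_mk]
  split_ifs with h
  · rfl
  · exact (pc_zero_of_gt j k i hj (by omega)).symm

lemma Tp_dvd (n : ℕ) : (PowerSeries.X ^ n : PowerSeries ℤ) ∣ Th - (Tp n : PowerSeries ℤ) := by
  rw [PowerSeries.X_pow_dvd_iff]
  intro m hm
  rw [map_sub, Polynomial.coeff_coe, Tp, PowerSeries.coeff_trunc, if_pos hm, sub_self]

lemma Tp_cube (n : ℕ) : Polynomial.X ^ n ∣ (Tp n) ^ 3 - (1 - 9 * Polynomial.X) ^ 2 := by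
  rw [coe_dvd_iff]
  have e : (((Tp n) ^ 3 - (1 - 9 * Polynomial.X) ^ 2 : Polynomial ℤ) : PowerSeries ℤ)
      = (Tp n : PowerSeries ℤ) ^ 3 - Th ^ 3 := by
    rw [Th_cube]
    push_cast
    have : ((9 : Polynomial ℤ) : PowerSeries ℤ) = 9 := by
      have := Polynomial.coe_C (9:ℤ)
      simpa using this
    rw [this]
  rw [e]
  have := Tp_dvd n
  rw [dvd_sub_comm] at this
  exact this.trans (sub_dvd_pow_sub_pow _ _ 3)

lemma Pp_dvd (j k n : ℕ) (hj : 1 ≤ j) (hk : 1 ≤ k) (hn : j + k + 1 ≤ n) :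
    Polynomial.X ^ (j + k + 1) ∣ Pp j k - Tp n * Qp j k := by
  rw [coe_dvd_iff]
  have hQ : (Qp j k : PowerSeries ℤ) = PowerSeries.mk (qc j k) := by
    ext i; rw [Polynomial.coeff_coe, Qp_coeff j k i hk, PowerSeries.coeff_mk]
  have h1 : (PowerSeries.X ^ (j + k + 1) : PowerSeries ℤ) ∣ (Pp j k : PowerSeries ℤ) - Th * Qp j k := by
    rw [PowerSeries.X_pow_dvd_iff]
    intro m hm
    rw [map_sub, Polynomial.coeff_coe, Pp_coeff j k m hj, hQ, pade_coeff j k hj hk m (by omega), sub_self]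
  have h2 := (pow_dvd_pow (PowerSeries.X : PowerSeries ℤ) hn).trans (Tp_dvd n)
  have e : ((Pp j k - Tp n * Qp j k : Polynomial ℤ) : PowerSeries ℤ)
     = (Pp j k - Th * Qp j k) + (Th - Tp n) * Qp j k := by
    push_cast; ring
  rw [e]
  exact dvd_add h1 (h2.mul_right _)

lemma pade_det (j k : ℕ) (hj : 1 ≤ j) (hk : 1 ≤ k) :
    Pp j k * Qp (j + 1) k - Pp (j + 1) k * Qp j k
      = Polynomial.C (cz (3 * (j:ℤ) + 2) k * cz (3 * (k:ℤ) - 2) (j + 1)) * Polynomial.X ^ (j + k + 1) := by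
  have h1 := Pp_dvd j k (j + k + 2) hj hk (by omega)
  have h2 := (pow_dvd_pow (Polynomial.X : Polynomial ℤ) (by omega : j + k + 1 ≤ j + 1 + k + 1)).trans
    (Pp_dvd (j + 1) k (j + k + 2) (by omega) hk (by omega))
  have h3 : Polynomial.X ^ (j + k + 1) ∣ Pp j k * Qp (j + 1) k - Pp (j + 1) k * Qp j k := by
    have e : Pp j k * Qp (j + 1) k - Pp (j + 1) k * Qp j k
      = (Pp j k - Tp (j + k + 2) * Qp j k) * Qp (j + 1) k
        - (Pp (j + 1) k - Tp (j + k + 2) * Qp (j + 1) k) * Qp j k := by ring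
    rw [e]
    exact dvd_sub (h1.mul_right _) (h2.mul_right _)
  have dP : ∀ j', (Pp j' k).natDegree ≤ k := fun j' =>
    Nat.lt_succ_iff.1 (PowerSeries.natDegree_trunc_lt _ _)
  have dQ : ∀ j', (Qp j' k).natDegree ≤ j' := fun j' =>
    Nat.lt_succ_iff.1 (PowerSeries.natDegree_trunc_lt _ _)
  rw [Polynomial.X_pow_dvd_iff] at h3
  ext m
  rw [Polynomial.coeff_C_mul, Polynomial.coeff_X_pow]
  rcases lt_trichotomy m (j + k + 1) with h | h | h
  · rw [h3 m h, if_neg (by omega), mul_zero]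
  · subst h
    rw [if_pos rfl, mul_one, Polynomial.coeff_sub]
    have e : j + k + 1 = k + (j + 1) := by omega
    have z : (Pp (j + 1) k * Qp j k).coeff (j + k + 1) = 0 := by
      apply Polynomial.coeff_eq_zero_of_natDegree_lt
      have := Polynomial.natDegree_mul_le (p := Pp (j + 1) k) (q := Qp j k)
      have := dP (j + 1); have := dQ j; omega
    rw [z, sub_zero, e, Polynomial.coeff_mul_add_eq_of_natDegree_le (dP j) (dQ (j + 1)),
      Pp_coeff _ _ _ hj, Qp_coeff _ _ _ hk, pc, qc]
    simp
  · rw [if_neg (by omega), mul_zero]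
    apply Polynomial.coeff_eq_zero_of_natDegree_lt
    refine lt_of_le_of_lt (Polynomial.natDegree_sub_le _ _) ?_
    have := Polynomial.natDegree_mul_le (p := Pp (j + 1) k) (q := Qp j k)
    have := Polynomial.natDegree_mul_le (p := Pp j k) (q := Qp (j + 1) k)
    have := dP (j + 1); have := dQ j; have := dP j; have := dQ (j + 1)
    apply max_lt <;> omega

-- evaluation forms
lemma eval_det (j k : ℕ) (hj : 1 ≤ j) (hk : 1 ≤ k) (w : ℤ) (hw : w ≠ 0) :
    (Pp j k).eval w * (Qp (j + 1) k).eval w - (Pp (j + 1) k).eval w * (Qp j k).eval w ≠ 0 := by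
  have h := congrArg (Polynomial.eval w) (pade_det j k hj hk)
  simp only [Polynomial.eval_sub, Polynomial.eval_mul, Polynomial.eval_C, Polynomial.eval_pow, Polynomial.eval_X] at h
  rw [h]
  exact mul_ne_zero (mul_ne_zero (cz_ne_zero _ (by omega) _) (cz_ne_zero _ (by omega) _)) (pow_ne_zero _ hw)

lemma eval_Pp_dvd (j k n : ℕ) (hj : 1 ≤ j) (hk : 1 ≤ k) (hn : j + k + 1 ≤ n) (w : ℤ) :
    w ^ (j + k + 1) ∣ (Pp j k).eval w - (Tp n).eval w * (Qp j k).eval w := by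
  have := map_dvd (Polynomial.evalRingHom w) (Pp_dvd j k n hj hk hn)
  simpa using this

lemma eval_Tp_cube (n : ℕ) (w : ℤ) : w ^ n ∣ (Tp n).eval w ^ 3 - (1 - 9 * w) ^ 2 := by
  have := map_dvd (Polynomial.evalRingHom w) (Tp_cube n)
  simpa using this

lemma eval_Tp_mod (n : ℕ) (hn : 1 ≤ n) (w : ℤ) : w ∣ (Tp n).eval w - 1 := by
  have h : (Polynomial.X) ∣ Tp n - 1 := by
    rw [Polynomial.X_dvd_iff]
    simp [Tp, PowerSeries.coeff_trunc, Th, cz_zero, show 0 < n from hn]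
  have := map_dvd (Polynomial.evalRingHom w) h
  simpa using this

-- sizes
lemma cz_bound_q (k i : ℕ) (h : i ≤ k) : |cz (3 * (k:ℤ) - 2) i| ≤ 9 ^ i * (k.choose i : ℤ) := by
  induction i with
  | zero => simp [cz_zero]
  | succ s ih =>
    have ih := ih (by omega)
    have h1 := congrArg abs (cz_succ (3 * (k:ℤ) - 2) s)
    have h2 := Nat.choose_succ_right_eq k s
    rw [abs_mul, abs_mul, abs_of_nonneg (by positivity : (0:ℤ) ≤ (s:ℤ) + 1)] at h1
    have hs : (s:ℤ) + 1 ≤ k := by exact_mod_cast h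
    have h3 : |3 * (3 * (s:ℤ) - (3 * (k:ℤ) - 2))| ≤ 9 * ((k:ℤ) - s) := by
      rw [abs_le]; constructor <;> linarith
    zify [show s ≤ k by omega] at h2
    have hp : (0:ℤ) < (s:ℤ) + 1 := by positivity
    refine le_of_mul_le_mul_left ?_ hp
    rw [h1]
    calc _ ≤ 9 * ((k:ℤ) - s) * (9 ^ s * (k.choose s : ℤ)) := by
            apply mul_le_mul h3 ih (abs_nonneg _) (by linarith)
      _ = _ := by rw [pow_succ]; linear_combination (-9) * 9 ^ s * h2

lemma Qp_bound (j k : ℕ) (hk : 1 ≤ k) (hjk : j ≤ k) (w : ℤ) (hw : 2 ≤ w) :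
    16 ^ k * |(Qp j k).eval w| ≤ 34 ^ k * (9 * w) ^ j := by
  have e : (Qp j k).eval w = ∑ i ∈ range (j + 1), qc j k i * w ^ i := by
    rw [Polynomial.eval_eq_sum_range' (p := Qp j k) (n := j + 1) (PowerSeries.natDegree_trunc_lt _ _)]
    exact sum_congr rfl (fun i _ => by rw [Qp_coeff _ _ _ hk])
  rw [e]
  have term : ∀ i ∈ range (j + 1), 16 ^ k * |qc j k i * w ^ i| ≤ (k.choose i : ℤ) * (17 ^ k * (9 * w) ^ j) := by
    intro i hi
    rw [mem_range] at hi
    obtain ⟨l, rfl⟩ : ∃ l, j = i + l := ⟨j - i, by omega⟩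
    have h1 := cz_bound_q k i (by omega)
    rw [qc, show i + l + k - i = k + l by omega, abs_mul, abs_mul, abs_pow, abs_of_nonneg (by linarith : 0 ≤ w),
      Nat.abs_cast]
    have h2 : (16:ℤ) ^ k * ((k + l).choose k : ℤ) ≤ 17 ^ k * 17 ^ l := by
      have := add_pow (16:ℤ) 1 (k + l)
      rw [← pow_add, show (17:ℤ) = 16 + 1 by norm_num, this]
      have := single_le_sum (s := range (k + l + 1)) (f := fun m => (16:ℤ) ^ m * 1 ^ (k + l - m) * ((k + l).choose m : ℤ))
        (fun m _ => by positivity) (mem_range.2 (by omega : k < k + l + 1))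
      simpa using this
    have h3 : (17:ℤ) ^ l ≤ (9 * w) ^ l := pow_le_pow_left₀ (by norm_num) (by linarith) l
    have hw0 : 0 ≤ w := by linarith
    calc 16 ^ k * (|cz (3 * (k:ℤ) - 2) i| * ((k + l).choose k : ℤ) * w ^ i)
        = |cz (3 * (k:ℤ) - 2) i| * (16 ^ k * ((k + l).choose k : ℤ)) * w ^ i := by ring
      _ ≤ (9 ^ i * (k.choose i : ℤ)) * (17 ^ k * (9 * w) ^ l) * w ^ i := by
          have h4 : (16:ℤ) ^ k * ((k + l).choose k : ℤ) ≤ 17 ^ k * (9 * w) ^ l := h2.trans (by gcongr)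
          have h5 := mul_le_mul h1 h4 (by positivity) (by positivity)
          exact mul_le_mul_of_nonneg_right h5 (by positivity)
      _ = _ := by rw [mul_pow 9 w, mul_pow 9 w, pow_add, pow_add]; ring
  calc 16 ^ k * |∑ i ∈ range (j + 1), qc j k i * w ^ i|
      ≤ 16 ^ k * ∑ i ∈ range (j + 1), |qc j k i * w ^ i| := by gcongr; exact abs_sum_le_sum_abs _ _
    _ ≤ ∑ i ∈ range (j + 1), (k.choose i : ℤ) * (17 ^ k * (9 * w) ^ j) := by
        rw [mul_sum]; exact sum_le_sum term
    _ ≤ ∑ i ∈ range (k + 1), (k.choose i : ℤ) * (17 ^ k * (9 * w) ^ j) := by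
        apply sum_le_sum_of_subset_of_nonneg
        · intro x; simp only [mem_range]; omega
        · intro i _ _; positivity
    _ = 34 ^ k * (9 * w) ^ j := by
        rw [← sum_mul]
        have := Nat.sum_range_choose k
        have h : (∑ i ∈ range (k + 1), (k.choose i : ℤ)) = 2 ^ k := by exact_mod_cast this
        rw [h, show (34:ℤ) ^ k = 2 ^ k * 17 ^ k by rw [← mul_pow]; norm_num]; ring

lemma cz_bound_p1 (j i : ℕ) (h : i ≤ j + 1) : |cz (3 * (j:ℤ) + 2) i| ≤ 9 ^ i * ((j + 1).choose i : ℤ) := by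
  induction i with
  | zero => simp [cz_zero]
  | succ s ih =>
    have ih := ih (by omega)
    have h1 := congrArg abs (cz_succ (3 * (j:ℤ) + 2) s)
    have h2 := Nat.choose_succ_right_eq (j + 1) s
    rw [abs_mul, abs_mul, abs_of_nonneg (by positivity : (0:ℤ) ≤ (s:ℤ) + 1)] at h1
    have hs : (s:ℤ) ≤ j := by exact_mod_cast (by omega : s ≤ j)
    have h3 : |3 * (3 * (s:ℤ) - (3 * (j:ℤ) + 2))| ≤ 9 * ((j:ℤ) + 1 - s) := by
      rw [abs_le]; constructor <;> linarith
    zify [show s ≤ j + 1 by omega] at h2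
    have hp : (0:ℤ) < (s:ℤ) + 1 := by positivity
    refine le_of_mul_le_mul_left ?_ hp
    rw [h1]
    calc _ ≤ 9 * ((j:ℤ) + 1 - s) * (9 ^ s * ((j + 1).choose s : ℤ)) := by
            apply mul_le_mul h3 ih (abs_nonneg _) (by linarith)
      _ = _ := by rw [pow_succ]; linear_combination (-9) * 9 ^ s * h2

lemma cz_bound_p2 (j r : ℕ) :
    |cz (3 * (j:ℤ) + 2) (j + 1 + r)| * ((j + 1 + r).choose (j + 1) : ℤ) ≤ 9 ^ (j + 1 + r) := by
  induction r with
  | zero => simpa using cz_bound_p1 j (j + 1) le_rfl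
  | succ r ih =>
    have h1 := congrArg abs (cz_succ (3 * (j:ℤ) + 2) (j + 1 + r))
    rw [abs_mul, abs_mul, abs_of_nonneg (by positivity : (0:ℤ) ≤ ((j + 1 + r : ℕ):ℤ) + 1)] at h1
    have h2 := Nat.choose_mul_succ_eq (j + 1 + r) (j + 1)
    have e : j + 1 + r + 1 - (j + 1) = r + 1 := by omega
    rw [e] at h2
    zify at h2
    rw [show j + 1 + (r + 1) = j + 1 + r + 1 by omega]
    set A := |cz (3 * (j:ℤ) + 2) (j + 1 + r + 1)|
    set B := |cz (3 * (j:ℤ) + 2) (j + 1 + r)|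
    set c := ((j + 1 + r).choose (j + 1) : ℤ)
    set c' := ((j + 1 + r + 1).choose (j + 1) : ℤ)
    have h3 : |3 * (3 * ((j + 1 + r : ℕ):ℤ) - (3 * (j:ℤ) + 2))| ≤ 9 * ((r:ℤ) + 1) := by
      push_cast
      rw [abs_le]; constructor <;> linarith
    have hp : (0:ℤ) < (((j + 1 + r : ℕ):ℤ) + 1) * ((r:ℤ) + 1) := by positivity
    have hB : 0 ≤ B := abs_nonneg _
    have hc : 0 ≤ c := by positivity
    refine le_of_mul_le_mul_left ?_ hp
    calc _ = ((((j + 1 + r : ℕ):ℤ) + 1) * A) * (c' * ((r:ℤ) + 1)) := by ring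
      _ = (|3 * (3 * ((j + 1 + r : ℕ):ℤ) - (3 * (j:ℤ) + 2))| * B) * (c * (((j + 1 + r : ℕ):ℤ) + 1)) := by
          rw [h1]; push_cast at *; rw [← h2]
      _ ≤ (9 * ((r:ℤ) + 1) * B) * (c * (((j + 1 + r : ℕ):ℤ) + 1)) := by gcongr
      _ = 9 * ((((j + 1 + r : ℕ):ℤ) + 1) * ((r:ℤ) + 1)) * (B * c) := by ring
      _ ≤ 9 * ((((j + 1 + r : ℕ):ℤ) + 1) * ((r:ℤ) + 1)) * 9 ^ (j + 1 + r) := by gcongr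
      _ = _ := by rw [pow_succ 9]; ring

lemma pc_bound (j k s : ℕ) (hjk : 2 * j + 1 ≤ k) (hs : s ≤ k) : |pc j k s| ≤ 9 ^ s * 8 ^ (k - s) := by
  obtain ⟨l, rfl⟩ : ∃ l, k = s + l := ⟨k - s, by omega⟩
  rw [pc, show j + (s + l) - s = j + l by omega, show s + l - s = l by omega, abs_mul, Nat.abs_cast]
  have hch : ((j + l).choose j : ℤ) ≤ 2 ^ (j + l) := by exact_mod_cast Nat.choose_le_two_pow (j + l) j
  have pw : ∀ m, m ≤ 3 * l → (2:ℤ) ^ m ≤ 8 ^ l := by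
    intro m hm
    rw [show (8:ℤ) = 2 ^ 3 by norm_num, ← pow_mul]
    exact pow_le_pow_right₀ (by norm_num) hm
  by_cases h : s ≤ j
  · have h1 := cz_bound_p1 j s (by omega)
    have h2 : ((j + 1).choose s : ℤ) ≤ 2 ^ (j + 1) := by exact_mod_cast Nat.choose_le_two_pow (j + 1) s
    calc |cz (3 * (j:ℤ) + 2) s| * ((j + l).choose j : ℤ) ≤ (9 ^ s * 2 ^ (j + 1)) * 2 ^ (j + l) := by
            apply mul_le_mul (h1.trans (by gcongr)) hch (by positivity) (by positivity)
      _ = 9 ^ s * 2 ^ (j + 1 + (j + l)) := by rw [pow_add 2 (j + 1)]; ring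
      _ ≤ _ := by gcongr; exact pw _ (by omega)
  · obtain ⟨r, rfl⟩ : ∃ r, s = j + 1 + r := ⟨s - j - 1, by omega⟩
    have h1 := cz_bound_p2 j r
    have hpos : 1 ≤ ((j + 1 + r).choose (j + 1) : ℤ) := by
      exact_mod_cast Nat.choose_pos (by omega)
    by_cases h' : l ≤ r
    · have h2 : ((j + l).choose j : ℤ) ≤ ((j + 1 + r).choose (j + 1) : ℤ) := by
        have a1 : (j + l).choose j ≤ (j + l + 1).choose (j + 1) := by
          rw [Nat.choose_succ_succ]; omega
        have a2 : (j + l + 1).choose (j + 1) ≤ (j + 1 + r).choose (j + 1) :=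
          Nat.choose_le_choose _ (by omega)
        exact_mod_cast a1.trans a2
      calc _ ≤ |cz (3 * (j:ℤ) + 2) (j + 1 + r)| * ((j + 1 + r).choose (j + 1) : ℤ) := by gcongr
        _ ≤ 9 ^ (j + 1 + r) * 1 := by linarith
        _ ≤ _ := by gcongr; exact one_le_pow₀ (by norm_num)
    · have h3 : |cz (3 * (j:ℤ) + 2) (j + 1 + r)| ≤ 9 ^ (j + 1 + r) := by
        refine le_trans ?_ h1
        exact le_mul_of_one_le_right (abs_nonneg _) hpos
      apply mul_le_mul h3 (hch.trans (pw _ (by omega))) (by positivity) (by positivity)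

lemma Pp_bound (j k : ℕ) (hj : 1 ≤ j) (hjk : 2 * j + 1 ≤ k) (w : ℤ) (hw : 2 ≤ w) :
    |(Pp j k).eval w| ≤ 2 * (9 * w) ^ k := by
  have e : (Pp j k).eval w = ∑ i ∈ range (k + 1), pc j k i * w ^ i := by
    rw [Polynomial.eval_eq_sum_range' (p := Pp j k) (n := k + 1) (PowerSeries.natDegree_trunc_lt _ _)]
    exact sum_congr rfl (fun i _ => by rw [Pp_coeff _ _ _ hj])
  have hw0 : 0 ≤ w := by linarith
  have key : ∀ m : ℕ, ∑ i ∈ range (m + 1), (9 * w) ^ i * 8 ^ (m - i) ≤ 2 * (9 * w) ^ m := by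
    intro m
    induction m with
    | zero => simp
    | succ m ih =>
      rw [sum_range_succ]
      have : ∑ i ∈ range (m + 1), (9 * w) ^ i * 8 ^ (m + 1 - i) = 8 * ∑ i ∈ range (m + 1), (9 * w) ^ i * 8 ^ (m - i) := by
        rw [mul_sum]
        apply sum_congr rfl
        intro i hi
        rw [mem_range] at hi
        rw [show m + 1 - i = (m - i) + 1 by omega, pow_succ]; ring
      rw [this, Nat.sub_self, pow_zero, mul_one]
      have hp : 0 ≤ (9 * w) ^ m := by positivity
      rw [pow_succ]
      nlinarith
  rw [e]
  calc |∑ i ∈ range (k + 1), pc j k i * w ^ i| ≤ ∑ i ∈ range (k + 1), |pc j k i * w ^ i| := abs_sum_le_sum_abs _ _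
    _ ≤ ∑ i ∈ range (k + 1), (9 * w) ^ i * 8 ^ (k - i) := by
        apply sum_le_sum
        intro i hi
        rw [mem_range] at hi
        rw [abs_mul, abs_pow, abs_of_nonneg hw0, mul_pow]
        have := pc_bound j k i hjk (by omega)
        calc _ ≤ (9 ^ i * 8 ^ (k - i)) * w ^ i := by gcongr
          _ = _ := by ring
    _ ≤ _ := key k

end HJ
end

section
namespace HJ
open Finset

lemma cube_sub_dvd (M t : ℤ) (s : ℕ) (hM : (3:ℤ) ∣ M - 1) (ht : (3:ℤ) ∣ t - 1)
    (h : (3:ℤ) ^ (s + 1) ∣ M ^ 3 - t ^ 3) : (3:ℤ) ^ s ∣ M - t := by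
  obtain ⟨a, ha⟩ := hM
  obtain ⟨c, hc⟩ := ht
  have e : M ^ 3 - t ^ 3 = 3 * ((M - t) * (1 + 3 * (a + c + a ^ 2 + a * c + c ^ 2))) := by
    obtain rfl : M = 1 + 3 * a := by linarith
    obtain rfl : t = 1 + 3 * c := by linarith
    ring
  rw [e, pow_succ'] at h
  have h2 := (mul_dvd_mul_iff_left (by norm_num : (3:ℤ) ≠ 0)).1 h
  have hc : IsCoprime ((3:ℤ) ^ s) (1 + 3 * (a + c + a ^ 2 + a * c + c ^ 2)) := by
    apply IsCoprime.pow_left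
    exact ⟨-(a + c + a ^ 2 + a * c + c ^ 2), 1, by ring⟩
  exact hc.dvd_of_dvd_mul_right h2

lemma M_mod3 (N g M : ℤ) (hN : (3:ℤ) ∣ N)
    (h : M ^ 3 - 3 * N * g ^ 2 * M + N * (N + 1) * g ^ 3 = (N - 1) ^ 2) : (3:ℤ) ∣ M - 1 := by
  obtain ⟨c, rfl⟩ := hN
  have h1 : (3:ℤ) ∣ M ^ 3 - 1 := ⟨3 * c * g ^ 2 * M - c * (3 * c + 1) * g ^ 3 + 3 * c ^ 2 - 2 * c, by linear_combination h⟩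
  have h2 : (3:ℤ) ∣ M ^ 3 - M := by
    have := Int.emod_emod_of_dvd M (by norm_num : (3:ℤ) ∣ 3)
    have h3 : M % 3 = 0 ∨ M % 3 = 1 ∨ M % 3 = 2 := by omega
    apply Int.dvd_of_emod_eq_zero
    rcases h3 with h | h | h <;> simp [pow_succ, Int.sub_emod, Int.mul_emod, h]
  have : M - 1 = (M ^ 3 - 1) - (M ^ 3 - M) := by ring
  rw [this]; exact dvd_sub h1 h2

lemma M_lower (E g M : ℤ) (hE : 9 ≤ E) (hg : 1 ≤ g)
    (h : M ^ 3 - 3 * (9 * E ^ 3) * g ^ 2 * M + (9 * E ^ 3) * ((9 * E ^ 3) + 1) * g ^ 3 = ((9 * E ^ 3) - 1) ^ 2) :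
    - (5 * E ^ 2 * g) ≤ M := by
  by_contra hlt
  push Not at hlt
  set m := -M with hm
  set A := E ^ 2 * g with hA
  have hA0 : 0 < A := by positivity
  have hmA : 5 * A < m := by rw [hA, hm]; linarith
  have h1 : m * (m ^ 2 - 27 * E ^ 3 * g ^ 2) ≤ 9 * E ^ 3 * (9 * E ^ 3 + 1) * g ^ 3 := by
    have : m * (m ^ 2 - 27 * E ^ 3 * g ^ 2) = 9 * E ^ 3 * (9 * E ^ 3 + 1) * g ^ 3 - ((9 * E ^ 3) - 1) ^ 2 := by
      rw [hm]; linear_combination -h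
    rw [this]; nlinarith [sq_nonneg ((9 * E ^ 3) - 1)]
  have h2 : 25 * A ^ 2 ≤ m ^ 2 := by nlinarith
  have hg3 : 0 < g ^ 3 := by positivity
  have h3 : 27 * E ^ 3 * g ^ 2 ≤ 3 * A ^ 2 := by
    have : 0 ≤ E ^ 3 * g ^ 2 * (E - 9) := by
      apply mul_nonneg (by positivity) (by linarith)
    rw [hA]; nlinarith
  have h4 : 22 * A ^ 2 ≤ m ^ 2 - 27 * E ^ 3 * g ^ 2 := by linarith
  have h5 : 5 * A * (22 * A ^ 2) ≤ m * (m ^ 2 - 27 * E ^ 3 * g ^ 2) := by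
    apply mul_le_mul hmA.le h4 (by positivity) (by linarith)
  have h6 : 9 * E ^ 3 * (9 * E ^ 3 + 1) * g ^ 3 ≤ 90 * A ^ 3 := by
    have : 1 ≤ E ^ 3 := one_le_pow₀ (by linarith)
    have e : 90 * A ^ 3 - 9 * E ^ 3 * (9 * E ^ 3 + 1) * g ^ 3 = 9 * E ^ 3 * g ^ 3 * (E ^ 3 - 1) := by
      rw [hA]; ring
    have : 0 ≤ 9 * E ^ 3 * g ^ 3 * (E ^ 3 - 1) := mul_nonneg (by positivity) (by linarith)
    linarith
  have : 0 < A ^ 3 := by positivity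
  nlinarith

lemma M_neg (r g M : ℤ) (hr : 3 ≤ r) (hg : 2 ≤ g)
    (h : M ^ 3 - 3 * (r ^ 2) * g ^ 2 * M + (r ^ 2) * ((r ^ 2) + 1) * g ^ 3 = ((r ^ 2) - 1) ^ 2) : M < 0 := by
  by_contra hM
  push Not at hM
  have h1 : 0 ≤ (M - r * g) ^ 2 * (M + 2 * r * g) := by
    apply mul_nonneg (sq_nonneg _); positivity
  have h2 : (r - 1) ^ 2 * (r ^ 2 * g ^ 3 - (r + 1) ^ 2) ≤ 0 := by nlinarith
  have hg3 : 8 ≤ g ^ 3 := by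
    have : (2:ℤ) ^ 3 ≤ g ^ 3 := pow_le_pow_left₀ (by norm_num) hg 3
    linarith
  have h3 : 0 < r ^ 2 * g ^ 3 - (r + 1) ^ 2 := by nlinarith
  have h4 : 0 < (r - 1) ^ 2 := by have : 0 < r - 1 := by linarith
                                  positivity
  nlinarith

lemma M_size (e d : ℕ) (he : 1 ≤ e) (hd : 1 ≤ d) (M : ℤ)
    (h : M ^ 3 - 3 * (9 * (9 ^ e) ^ 3) * (9 ^ d) ^ 2 * M
      + (9 * (9 ^ e) ^ 3) * ((9 * (9 ^ e) ^ 3) + 1) * (9 ^ d) ^ 3 = ((9 * (9 ^ e) ^ 3) - 1) ^ 2) :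
    M < 0 ∧ |M| ≤ 5 * (9 ^ e) ^ 2 * 9 ^ d := by
  have hE : (9:ℤ) ≤ 9 ^ e := by
    calc (9:ℤ) = 9 ^ 1 := by norm_num
      _ ≤ _ := pow_le_pow_right₀ (by norm_num) he
  have hg : (9:ℤ) ≤ 9 ^ d := by
    calc (9:ℤ) = 9 ^ 1 := by norm_num
      _ ≤ _ := pow_le_pow_right₀ (by norm_num) hd
  have h1 := M_lower (9 ^ e) (9 ^ d) M hE (by linarith) h
  have hr : (9 * (9 ^ e) ^ 3 : ℤ) = (3 * (3 ^ e) ^ 3) ^ 2 := by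
    rw [show (9:ℤ) ^ e = (3 ^ e) ^ 2 by rw [← pow_mul, mul_comm, pow_mul]; norm_num]; ring
  rw [hr] at h
  have h2 := M_neg (3 * (3 ^ e) ^ 3) (9 ^ d) M (by
    have : (1:ℤ) ≤ (3 ^ e) ^ 3 := one_le_pow₀ (one_le_pow₀ (by norm_num))
    linarith) (by linarith) h
  exact ⟨h2, by rw [abs_le]; constructor <;> linarith⟩

/-- the main Pade step -/
lemma pade_step (e d j k : ℕ) (he : 1 ≤ e) (hd : 1 ≤ d) (hj : 1 ≤ j) (hjk : 2 * j + 3 ≤ k)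
    (hl1 : 2 * d ≤ k * (3 * e + 1)) (hl2 : k * (3 * e + 1) + 1 ≤ 2 * d + (3 * e + 1))
    (hjb : k + 1 ≤ j * (3 * e))
    (hmain : 3 * k + (3 * e + 1) + 6 * (3 * e + 1) * (j + 1) ≤ 3 * k * (3 * e + 1) + 1)
    (M : ℤ)
    (h : M ^ 3 - 3 * (9 * (9 ^ e) ^ 3) * (9 ^ d) ^ 2 * M
      + (9 * (9 ^ e) ^ 3) * ((9 * (9 ^ e) ^ 3) + 1) * (9 ^ d) ^ 3 = ((9 * (9 ^ e) ^ 3) - 1) ^ 2) :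
    False := by
  obtain ⟨-, hsize⟩ := M_size e d he hd M h
  have hM3 := M_mod3 (9 * (9 ^ e) ^ 3) (9 ^ d) M ⟨3 * (9 ^ e) ^ 3, by ring⟩ h
  set w : ℤ := (9 ^ e) ^ 3 with hw
  have hw3 : w = 3 ^ (6 * e) := by
    rw [hw, show (9:ℤ) = 3 ^ 2 by norm_num, ← pow_mul, ← pow_mul]; congr 1; ring
  have hg3 : (9:ℤ) ^ d = 3 ^ (2 * d) := by rw [show (9:ℤ) = 3 ^ 2 by norm_num, ← pow_mul]
  have hE3 : (9:ℤ) ^ e = 3 ^ (2 * e) := by rw [show (9:ℤ) = 3 ^ 2 by norm_num, ← pow_mul]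
  have hN3 : 9 * w = 3 ^ (6 * e + 2) := by rw [hw3, pow_add]; ring
  have hNg : 9 * w * (9 ^ d) ^ 2 = 3 ^ (6 * e + 2 + 4 * d) := by
    rw [hN3, hg3, ← pow_mul, ← pow_add]; congr 1; ring
  have hw9 : 9 ≤ w := by
    calc (9:ℤ) = 3 ^ 2 := by norm_num
      _ ≤ 3 ^ (6 * e) := pow_le_pow_right₀ (by norm_num) (by omega)
      _ = w := hw3.symm
  set n := j + k + 1 with hn
  have hexp : 3 * e + 1 + 2 * d ≤ 3 * e * n := by
    rw [hn]; nlinarith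
  -- M = t mod N g^2
  set t := (Tp (n + 1)).eval w with ht
  have ht3 : (3:ℤ) ∣ t - 1 :=
    dvd_trans (by rw [hw3]; exact dvd_pow_self _ (by omega)) (eval_Tp_mod (n + 1) (by omega) w)
  have hMt : (3:ℤ) ^ (6 * e + 2 + 4 * d) ∣ M - t := by
    apply cube_sub_dvd M t _ hM3 ht3
    have a1 : (3:ℤ) ^ (6 * e + 2 + 4 * d + 1) ∣ t ^ 3 - (1 - 9 * w) ^ 2 := by
      refine dvd_trans ?_ (eval_Tp_cube (n + 1) w)
      rw [hw3, ← pow_mul]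
      apply pow_dvd_pow
      have : 6 * e * (n + 1) = 2 * (3 * e * n) + 6 * e := by ring
      omega
    have a2 : (3:ℤ) ^ (6 * e + 2 + 4 * d + 1) ∣ 9 * w * (9 ^ d) ^ 3 := by
      rw [hN3, hg3, ← pow_mul, ← pow_add]
      apply pow_dvd_pow; omega
    have a3 : (3:ℤ) ^ (6 * e + 2 + 4 * d + 1) = 3 * (9 * w * (9 ^ d) ^ 2) := by
      rw [hNg, pow_succ]; ring
    have e1 : M ^ 3 - t ^ 3 = 3 * (9 * w * (9 ^ d) ^ 2) * M - (9 * w * (9 ^ d) ^ 3) * (9 * w + 1)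
        - (t ^ 3 - (1 - 9 * w) ^ 2) := by linear_combination h
    rw [e1]
    refine dvd_sub (dvd_sub ?_ (a2.mul_right _)) a1
    rw [a3]; exact Dvd.intro _ rfl
  have hD : ∀ j', j ≤ j' → j' ≤ j + 1 → (9 * w * (9 ^ d) ^ 2) ∣ M * (Qp j' k).eval w - (Pp j' k).eval w := by
    intro j' h1 h2
    have b1 := eval_Pp_dvd j' k (n + 1) (by omega) (by omega) (by omega) w
    have b2 : 9 * w * (9 ^ d) ^ 2 ∣ w ^ (j' + k + 1) := by
      rw [hNg, hw3, ← pow_mul]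
      apply pow_dvd_pow
      have : 6 * e * (j' + k + 1) = 2 * (3 * e * n) + 6 * e * (j' - j) := by
        rw [hn]; obtain ⟨r, rfl⟩ := Nat.exists_eq_add_of_le h1
        rw [Nat.add_sub_cancel_left]; ring
      omega
    rw [← hNg] at hMt
    have e2 : M * (Qp j' k).eval w - (Pp j' k).eval w
       = (M - t) * (Qp j' k).eval w - ((Pp j' k).eval w - t * (Qp j' k).eval w) := by ring
    rw [e2]
    exact dvd_sub (hMt.mul_right _) (b2.trans b1)
  have hNgpos : 0 < 9 * w * (9 ^ d) ^ 2 := by positivity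
  have hzero : ∀ j', j ≤ j' → j' ≤ j + 1 → M * (Qp j' k).eval w - (Pp j' k).eval w = 0 := by
    intro j' h1 h2
    apply Int.eq_zero_of_abs_lt_dvd (hD j' h1 h2)
    have c1 := Qp_bound j' k (by omega) (by omega) w (by linarith)
    have c2 := Pp_bound j' k (by omega) (by omega) w (by linarith)
    have c3 : 9 * (9 * w) ^ k ≤ 9 * w * (9 ^ d) ^ 2 := by
      rw [hNg, hN3, ← pow_mul, show (9:ℤ) = 3 ^ 2 by norm_num, ← pow_add]
      apply pow_le_pow_right₀ (by norm_num)
      have : (6 * e + 2) * k = 2 * (k * (3 * e + 1)) := by ring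
      omega
    have c4 : 9 * 3 ^ k * (9 ^ e) ^ 2 * (9 * w) ^ j' ≤ 9 * w * 9 ^ d := by
      rw [hE3, hg3, hN3, ← pow_mul, ← pow_mul, show (9:ℤ) = 3 ^ 2 by norm_num, ← pow_add, ← pow_add,
        ← pow_add, ← pow_add]
      apply pow_le_pow_right₀ (by norm_num)
      have e1 : (6 * e + 2) * j' ≤ (6 * e + 2) * (j + 1) := Nat.mul_le_mul_left _ h2
      have e2 : 6 * (3 * e + 1) * (j + 1) = 3 * ((6 * e + 2) * (j + 1)) := by ring
      have e3 : 3 * k * (3 * e + 1) = 3 * (k * (3 * e + 1)) := by ring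
      omega
    have c5 : 10 * (34:ℤ) ^ k ≤ 9 * (3 ^ k * 16 ^ k) := by
      rw [← mul_pow, show (3 * 16 : ℤ) = 48 by norm_num]
      obtain ⟨k', rfl⟩ : ∃ k', k = k' + 1 := ⟨k - 1, by omega⟩
      have : (34:ℤ) ^ k' ≤ 48 ^ k' := pow_le_pow_left₀ (by norm_num) (by norm_num) _
      have h0 : (0:ℤ) ≤ 34 ^ k' := by positivity
      rw [pow_succ, pow_succ]
      linarith
    have hMQ : 2 * |M * (Qp j' k).eval w| ≤ 9 * w * (9 ^ d) ^ 2 := by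
      have h16 : (0:ℤ) < 16 ^ k := by positivity
      refine le_of_mul_le_mul_left ?_ h16
      rw [abs_mul]
      have hX : 0 ≤ (9 * w) ^ j' := by positivity
      calc 16 ^ k * (2 * (|M| * |(Qp j' k).eval w|)) = 2 * |M| * (16 ^ k * |(Qp j' k).eval w|) := by ring
        _ ≤ 2 * (5 * (9 ^ e) ^ 2 * 9 ^ d) * (34 ^ k * (9 * w) ^ j') := by
            apply mul_le_mul (by linarith) c1 (by positivity) (by positivity)
        _ = (10 * 34 ^ k) * ((9 ^ e) ^ 2 * 9 ^ d * (9 * w) ^ j') := by ring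
        _ ≤ (9 * (3 ^ k * 16 ^ k)) * ((9 ^ e) ^ 2 * 9 ^ d * (9 * w) ^ j') := by
            apply mul_le_mul_of_nonneg_right c5 (by positivity)
        _ = 16 ^ k * 9 ^ d * (9 * 3 ^ k * (9 ^ e) ^ 2 * (9 * w) ^ j') := by ring
        _ ≤ 16 ^ k * 9 ^ d * (9 * w * 9 ^ d) := by
            apply mul_le_mul_of_nonneg_left c4 (by positivity)
        _ = _ := by ring
    have := abs_sub (M * (Qp j' k).eval w) ((Pp j' k).eval w)
    linarith
  have z1 := hzero j le_rfl (by omega)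
  have z2 := hzero (j + 1) (by omega) le_rfl
  apply eval_det j k hj (by omega) w (by linarith)
  linear_combination (Qp j k).eval w * z2 - (Qp (j + 1) k).eval w * z1


/-- generic small-degree approximation step -/
lemma approx_eq (e d c : ℕ) (he : 1 ≤ e) (hd : 1 ≤ d) (M P : ℤ)
    (h : M ^ 3 - 3 * (9 * (9 ^ e) ^ 3) * (9 ^ d) ^ 2 * M
      + (9 * (9 ^ e) ^ 3) * ((9 * (9 ^ e) ^ 3) + 1) * (9 ^ d) ^ 3 = ((9 * (9 ^ e) ^ 3) - 1) ^ 2)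
    (hP3 : (3:ℤ) ∣ P - 1)
    (hP : (3:ℤ) ^ (2 * c + 1) ∣ P ^ 3 - (1 - 9 * (9 ^ e) ^ 3) ^ 2)
    (hs1 : 5 * (9 ^ e) ^ 2 * 9 ^ d + |P| < 9 ^ c)
    (hs2 : 5 * (9 ^ e) ^ 2 * 9 ^ d + |P| < 9 ^ (3 * e + 1 + 2 * d)) : M = P := by
  obtain ⟨-, hsize⟩ := M_size e d he hd M h
  have hM3 := M_mod3 (9 * (9 ^ e) ^ 3) (9 ^ d) M ⟨3 * (9 ^ e) ^ 3, by ring⟩ h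
  set w : ℤ := (9 ^ e) ^ 3 with hw
  set c' := min c (3 * e + 1 + 2 * d) with hc'
  have hw3 : w = 3 ^ (6 * e) := by
    rw [hw, show (9:ℤ) = 3 ^ 2 by norm_num, ← pow_mul, ← pow_mul]; congr 1; ring
  have hg3 : (9:ℤ) ^ d = 3 ^ (2 * d) := by rw [show (9:ℤ) = 3 ^ 2 by norm_num, ← pow_mul]
  have hN3 : 9 * w = 3 ^ (6 * e + 2) := by rw [hw3, pow_add]; ring
  have hMt : (3:ℤ) ^ (2 * c') ∣ M - P := by
    apply cube_sub_dvd M P _ hM3 hP3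
    have a1 : (3:ℤ) ^ (2 * c' + 1) ∣ P ^ 3 - (1 - 9 * w) ^ 2 :=
      dvd_trans (pow_dvd_pow _ (by omega)) hP
    have a2 : (3:ℤ) ^ (2 * c' + 1) ∣ 9 * w * (9 ^ d) ^ 3 := by
      rw [hN3, hg3, ← pow_mul, ← pow_add]
      apply pow_dvd_pow; omega
    have a3 : (3:ℤ) ^ (2 * c' + 1) ∣ 3 * (9 * w * (9 ^ d) ^ 2) := by
      rw [hN3, hg3, ← pow_mul, ← pow_add, ← pow_succ']
      apply pow_dvd_pow; omega
    have e1 : M ^ 3 - P ^ 3 = 3 * (9 * w * (9 ^ d) ^ 2) * M - (9 * w * (9 ^ d) ^ 3) * (9 * w + 1)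
        - (P ^ 3 - (1 - 9 * w) ^ 2) := by linear_combination h
    rw [e1]
    exact dvd_sub (dvd_sub (a3.mul_right _) (a2.mul_right _)) a1
  have hlt : |M - P| < 3 ^ (2 * c') := by
    have h1 := abs_sub M P
    have e9 : (3:ℤ) ^ (2 * c') = 9 ^ c' := by rw [pow_mul]; norm_num
    rw [e9]
    rcases min_choice c (3 * e + 1 + 2 * d) with hc | hc <;> rw [hc', hc] <;> linarith
  have := Int.eq_zero_of_abs_lt_dvd hMt hlt
  linarith

lemma pow_dichotomy (a b : ℕ) : 9 * (9:ℤ) ^ a ≤ 9 ^ b ∨ (9:ℤ) ^ b ≤ 9 ^ a := by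
  rcases lt_or_ge a b with h | h
  · left; rw [← pow_succ']; exact pow_le_pow_right₀ (by norm_num) h
  · right; exact pow_le_pow_right₀ (by norm_num) h

lemma small_case1 (e d : ℕ) (he : 1 ≤ e) (hd : 1 ≤ d) (hde : d ≤ 4 * e) (M : ℤ)
    (h : M ^ 3 - 3 * (9 * (9 ^ e) ^ 3) * (9 ^ d) ^ 2 * M
      + (9 * (9 ^ e) ^ 3) * ((9 * (9 ^ e) ^ 3) + 1) * (9 ^ d) ^ 3 = ((9 * (9 ^ e) ^ 3) - 1) ^ 2) :
    False := by
  have hw : ((9:ℤ) ^ e) ^ 3 = 9 ^ (3 * e) := by rw [← pow_mul, mul_comm]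
  have hw9 : (9:ℤ) ≤ 9 ^ (3 * e) := by
    calc (9:ℤ) = 9 ^ 1 := by norm_num
      _ ≤ _ := pow_le_pow_right₀ (by norm_num) (by omega)
  have hg9 : (9:ℤ) ≤ 9 ^ d := by
    calc (9:ℤ) = 9 ^ 1 := by norm_num
      _ ≤ _ := pow_le_pow_right₀ (by norm_num) (by omega)
  have habs : |1 - 6 * (9:ℤ) ^ (3 * e)| = 6 * 9 ^ (3 * e) - 1 := by rw [abs_of_neg (by linarith)]; ring
  have hM : M = 1 - 6 * (9 ^ e) ^ 3 := by
    apply approx_eq e d (6 * e + 1) he hd M _ h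
    · exact ⟨-2 * (9 ^ e) ^ 3, by ring⟩
    · refine ⟨1 - 8 * 9 ^ (3 * e), ?_⟩
      have : (3:ℤ) ^ (2 * (6 * e + 1) + 1) = 27 * (9 ^ (3 * e)) ^ 2 := by
        rw [show (9:ℤ) = 3 ^ 2 by norm_num, show (27:ℤ) = 3 ^ 3 by norm_num, ← pow_mul, ← pow_mul, ← pow_add]
        congr 1; ring
      rw [this, hw]; ring
    · rw [hw, habs]
      have a1 : ((9:ℤ) ^ e) ^ 2 * 9 ^ d ≤ 9 ^ (6 * e) := by
        rw [← pow_mul, ← pow_add]; exact pow_le_pow_right₀ (by norm_num) (by omega)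
      have a2 : 9 * (9:ℤ) ^ (3 * e) ≤ 9 ^ (6 * e) := by
        rw [← pow_succ']; exact pow_le_pow_right₀ (by norm_num) (by omega)
      have a3 : (0:ℤ) < 9 ^ (6 * e) := by positivity
      rw [pow_succ 9 (6 * e)]
      nlinarith
    · rw [hw, habs]
      have a1 : 9 * (((9:ℤ) ^ e) ^ 2 * 9 ^ d) ≤ 9 ^ (3 * e + 1 + 2 * d) := by
        rw [← pow_mul, ← pow_add, ← pow_succ']; exact pow_le_pow_right₀ (by norm_num) (by omega)
      have a2 : 81 * (9:ℤ) ^ (3 * e) ≤ 9 ^ (3 * e + 1 + 2 * d) := by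
        rw [show (81:ℤ) = 9 ^ 2 by norm_num, ← pow_add]; exact pow_le_pow_right₀ (by norm_num) (by omega)
      have a3 : (0:ℤ) < 9 ^ (3 * e + 1 + 2 * d) := by positivity
      nlinarith
  rw [hM, hw] at h
  have hdi := pow_dichotomy (3 * e) (3 * d)
  rw [show (9:ℤ) ^ (3 * d) = (9 ^ d) ^ 3 by rw [← pow_mul, mul_comm]] at hdi
  generalize (9:ℤ) ^ (3 * e) = w at *
  generalize (9:ℤ) ^ d = g at *
  have h2 : 3 * w * (8 * w - 1) = 3 * g ^ 2 * (6 * w - 1) + (9 * w + 1) * g ^ 3 := by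
    apply mul_left_cancel₀ (show (9 * w : ℤ) ≠ 0 by linarith)
    linear_combination -h
  have hg2 : 0 < g ^ 2 := by positivity
  have hg3 : 0 < g ^ 3 := by positivity
  have hgg : 9 * g ^ 2 ≤ g ^ 3 := by nlinarith
  have hww : 0 < w * g ^ 2 := by positivity
  have hwg3 : 0 < w * g ^ 3 := by positivity
  rcases hdi with h3 | h3
  · nlinarith
  · nlinarith

lemma small_case2 (e d : ℕ) (he : 1 ≤ e) (hd : 4 * e < d) (hde : d ≤ 7 * e) (M : ℤ)
    (h : M ^ 3 - 3 * (9 * (9 ^ e) ^ 3) * (9 ^ d) ^ 2 * M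
      + (9 * (9 ^ e) ^ 3) * ((9 * (9 ^ e) ^ 3) + 1) * (9 ^ d) ^ 3 = ((9 * (9 ^ e) ^ 3) - 1) ^ 2) :
    False := by
  have hw : ((9:ℤ) ^ e) ^ 3 = 9 ^ (3 * e) := by rw [← pow_mul, mul_comm]
  have hw9 : (9:ℤ) ≤ 9 ^ (3 * e) := by
    calc (9:ℤ) = 9 ^ 1 := by norm_num
      _ ≤ _ := pow_le_pow_right₀ (by norm_num) (by omega)
  have hg9 : (9:ℤ) ≤ 9 ^ d := by
    calc (9:ℤ) = 9 ^ 1 := by norm_num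
      _ ≤ _ := pow_le_pow_right₀ (by norm_num) (by omega)
  have habs : |1 - 6 * (9:ℤ) ^ (3 * e) - 9 * (9 ^ (3 * e)) ^ 2| ≤ 10 * (9 ^ (3 * e)) ^ 2 := by
    rw [abs_of_neg (by nlinarith)]; nlinarith
  have h6 : ((9:ℤ) ^ (3 * e)) ^ 2 = 9 ^ (6 * e) := by rw [← pow_mul]; congr 1; ring
  have hM : M = 1 - 6 * (9 ^ e) ^ 3 - 9 * ((9 ^ e) ^ 3) ^ 2 := by
    apply approx_eq e d (9 * e + 1) he (by omega) M _ h
    · exact ⟨-2 * (9 ^ e) ^ 3 - 3 * ((9 ^ e) ^ 3) ^ 2, by ring⟩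
    · rw [hw]
      have : (3:ℤ) ^ (2 * (9 * e + 1) + 1) = 27 * (9 ^ (3 * e)) ^ 3 := by
        rw [show (9:ℤ) = 3 ^ 2 by norm_num, show (27:ℤ) = 3 ^ 3 by norm_num, ← pow_mul, ← pow_mul, ← pow_add]
        congr 1; ring
      rw [this]
      generalize (9:ℤ) ^ (3 * e) = w
      exact ⟨4 - 27 * w - 54 * w ^ 2 - 27 * w ^ 3, by ring⟩
    · rw [hw]
      have a1 : ((9:ℤ) ^ e) ^ 2 * 9 ^ d ≤ 9 ^ (9 * e) := by
        rw [← pow_mul, ← pow_add]; exact pow_le_pow_right₀ (by norm_num) (by omega)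
      have a2 : 9 * (9:ℤ) ^ (6 * e) ≤ 9 ^ (9 * e) := by
        rw [← pow_succ']; exact pow_le_pow_right₀ (by norm_num) (by omega)
      have a3 : (0:ℤ) < 9 ^ (9 * e) := by positivity
      rw [h6] at habs ⊢
      rw [pow_succ 9 (9 * e)]
      nlinarith
    · rw [hw]
      have a1 : 9 * (((9:ℤ) ^ e) ^ 2 * 9 ^ d) ≤ 9 ^ (3 * e + 1 + 2 * d) := by
        rw [← pow_mul, ← pow_add, ← pow_succ']; exact pow_le_pow_right₀ (by norm_num) (by omega)
      have a2 : 81 * (9:ℤ) ^ (6 * e) ≤ 9 ^ (3 * e + 1 + 2 * d) := by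
        rw [show (81:ℤ) = 9 ^ 2 by norm_num, ← pow_add]; exact pow_le_pow_right₀ (by norm_num) (by omega)
      have a3 : (0:ℤ) < 9 ^ (3 * e + 1 + 2 * d) := by positivity
      rw [h6] at habs ⊢
      nlinarith
  rw [hM, hw] at h
  have hgw : 729 * ((9:ℤ) ^ (3 * e)) ^ 4 ≤ (9 ^ d) ^ 3 := by
    rw [show (729:ℤ) = 9 ^ 3 by norm_num, ← pow_mul, ← pow_mul, ← pow_add]
    exact pow_le_pow_right₀ (by norm_num) (by omega)
  clear hM hw habs h6
  generalize (9:ℤ) ^ (3 * e) = w at *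
  generalize (9:ℤ) ^ d = g at *
  have h2 : 3 * g ^ 2 * (9 * w ^ 2 + 6 * w - 1) + (9 * w + 1) * g ^ 3
      = 3 * w ^ 2 * (27 * w ^ 3 + 54 * w ^ 2 + 27 * w - 4) := by
    apply mul_left_cancel₀ (show (9 * w : ℤ) ≠ 0 by linarith)
    linear_combination h
  have h3 : 0 ≤ 3 * g ^ 2 * (9 * w ^ 2 + 6 * w - 1) := by
    apply mul_nonneg (by positivity); nlinarith
  have h4 : (9 * w + 1) * (729 * w ^ 4) ≤ (9 * w + 1) * g ^ 3 := by
    apply mul_le_mul_of_nonneg_left hgw; linarith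
  have h5 : 54 * w ^ 2 + 27 * w - 4 ≤ 54 * w ^ 3 := by nlinarith
  have hw2 : 0 < w ^ 2 := by positivity
  have h6 : 3 * w ^ 2 * (27 * w ^ 3 + 54 * w ^ 2 + 27 * w - 4) ≤ 3 * w ^ 2 * (81 * w ^ 3) := by
    apply mul_le_mul_of_nonneg_left _ (by positivity); linarith
  have h7 : 0 < w ^ 5 := by positivity
  have h8 : 0 < w ^ 4 := by positivity
  nlinarith


lemma check47 : (∀ d < 101, 1 ≤ d → ∃ p ∈ List.range 90, 1 < p ∧ ∀ m < p,
    (m ^ 3 + 3 * 9 ^ 4 * (9 ^ d) ^ 2 * (p - 1) * m + 9 ^ 4 * (9 ^ 4 + 1) * (9 ^ d) ^ 3 + (p - 1) * (9 ^ 4 - 1) ^ 2) % p ≠ 0) ∧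
    (∀ d < 25, 1 ≤ d → ∃ p ∈ List.range 80, 1 < p ∧ ∀ m < p,
    (m ^ 3 + 3 * 9 ^ 7 * (9 ^ d) ^ 2 * (p - 1) * m + 9 ^ 7 * (9 ^ 7 + 1) * (9 ^ d) ^ 3 + (p - 1) * (9 ^ 7 - 1) ^ 2) % p ≠ 0) := by
  decide +kernel

lemma mod_contra (N g M : ℤ) (N' g' p : ℕ) (hN : N = N') (hg : g = g') (hp : 1 < p) (hN1 : 1 ≤ N')
    (hno : ∀ m < p, (m ^ 3 + 3 * N' * g' ^ 2 * (p - 1) * m + N' * (N' + 1) * g' ^ 3 + (p - 1) * (N' - 1) ^ 2) % p ≠ 0)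
    (h : M ^ 3 - 3 * N * g ^ 2 * M + N * (N + 1) * g ^ 3 = (N - 1) ^ 2) : False := by
  have : NeZero p := ⟨by omega⟩
  apply hno (M : ZMod p).val (ZMod.val_lt _)
  have hc := congrArg (Int.cast : ℤ → ZMod p) h
  rw [← Nat.dvd_iff_mod_eq_zero, ← ZMod.natCast_eq_zero_iff]
  subst hN hg
  push_cast [Nat.cast_sub hp.le, Nat.cast_sub hN1] at hc ⊢
  simp only [ZMod.natCast_val, ZMod.cast_id', id, CharP.cast_eq_zero]
  linear_combination hc

lemma partC (e d : ℕ) (he : 1 ≤ e) (hd : 1 ≤ d) (M : ℤ)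
    (h : M ^ 3 - 3 * (9 * (9 ^ e) ^ 3) * (9 ^ d) ^ 2 * M
      + (9 * (9 ^ e) ^ 3) * ((9 * (9 ^ e) ^ 3) + 1) * (9 ^ d) ^ 3 = ((9 * (9 ^ e) ^ 3) - 1) ^ 2) :
    False := by
  rcases le_or_gt d (4 * e) with h1 | h1
  · exact small_case1 e d he hd h1 M h
  rcases le_or_gt d (7 * e) with h2 | h2
  · exact small_case2 e d he h1 h2 M h
  by_cases hA : e = 1 ∧ d < 101
  · obtain ⟨rfl, hd'⟩ := hA
    obtain ⟨p, -, hp, hno⟩ := check47.1 d hd' hd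
    exact mod_contra _ _ M (9 ^ 4) (9 ^ d) p (by norm_num) (by norm_num) hp (by norm_num) hno h
  by_cases hB : e = 2 ∧ d < 25
  · obtain ⟨rfl, hd'⟩ := hB
    obtain ⟨p, -, hp, hno⟩ := check47.2 d hd' hd
    exact mod_contra _ _ M (9 ^ 7) (9 ^ d) p (by norm_num) (by norm_num) hp (by norm_num) hno h
  -- k = ⌊(2d-1)/b⌋ + 1, j = ⌊k/(b-1)⌋+1
  obtain ⟨q, hq⟩ : ∃ q, q = (2 * d - 1) / (3 * e + 1) := ⟨_, rfl⟩
  have hq1 : q * (3 * e + 1) ≤ 2 * d - 1 := by rw [hq]; exact Nat.div_mul_le_self _ _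
  have hq2 : 2 * d - 1 < (q + 1) * (3 * e + 1) := by
    rw [hq, mul_comm (_ + 1)]; exact Nat.lt_mul_div_succ _ (show 0 < 3 * e + 1 by omega)
  obtain ⟨s, hs⟩ : ∃ s, s = (q + 1) / (3 * e) := ⟨_, rfl⟩
  have hs1 : s * (3 * e) ≤ q + 1 := by rw [hs]; exact Nat.div_mul_le_self _ _
  have hs2 : q + 1 < (s + 1) * (3 * e) := by
    rw [hs, mul_comm (_ + 1)]; exact Nat.lt_mul_div_succ _ (show 0 < 3 * e by omega)
  have key : 2 * (s + 1) + 3 ≤ q + 1 ∧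
      3 * (q + 1) + (3 * e + 1) + 6 * (3 * e + 1) * (s + 1 + 1) ≤ 3 * (q + 1) * (3 * e + 1) + 1 := by
    clear h hq hs
    rcases Nat.lt_or_ge e 3 with he3 | he3
    · interval_cases e
      · omega
      · omega
    · have hq4 : 4 ≤ q := by
        by_contra hlt
        have : q ≤ 3 := by omega
        interval_cases q <;> omega
      have hs9 : s * 9 ≤ q + 1 := by nlinarith
      constructor
      · omega
      · rcases Nat.eq_zero_or_pos s with h0 | h0
        · subst h0; nlinarith
        · have hq8 : 8 ≤ q := by omega
          nlinarith
  exact pade_step e d (s + 1) (q + 1) he hd (by omega) key.1 (by omega) (by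
    have : (q + 1) * (3 * e + 1) = q * (3 * e + 1) + (3 * e + 1) := by ring
    omega) (by omega) key.2 M h

end HJ
end

section
namespace HJ

section descent
variable {R : Type*} [CommRing R] [IsDomain R] [IsPrincipalIdealRing R]

lemma cop_aux {a b l r s : R} (hl : Prime l) (hab : IsCoprime a b)
    (hr : ¬ l ∣ r) (hs : ¬ l ∣ s) (H1 : ∀ p, p ∣ r → p ∣ s → p ∣ l * a ∧ p ∣ l * b) :
    IsCoprime r s := by
  refine isCoprime_of_prime_dvd (not_and.2 (fun _ hz ↦ hs (by simp [hz])))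
    (fun p hp hpr hps ↦ ?_)
  obtain ⟨h1, h2⟩ := H1 p hpr hps
  have hpl : ¬ p ∣ l := by
    intro h
    have := (hp.associated_of_dvd hl h)
    exact hr (this.symm.dvd.trans hpr)
  have ha := (hp.dvd_or_dvd h1).resolve_left hpl
  have hb := (hp.dvd_or_dvd h2).resolve_left hpl
  exact hp.not_isUnit (hab.isUnit_of_dvd' ha hb)

/-- One descent step. -/
lemma desc_step {h l : R} (hh : h ^ 2 + h + 1 = 0) (hlh : l = h - 1) (hl : Prime l)
    (Hu : ∀ u : Rˣ, (∃ n : ℤ, l ^ 2 ∣ (u - n : R)) → u = 1 ∨ u = -1)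
    (Hc : ∀ x : R, ¬ l ∣ x → l ^ 2 ∣ x ^ 3 - 1 ∨ l ^ 2 ∣ x ^ 3 + 1)
    (n : ℕ) (a b c : R) (u : Rˣ) (hab : IsCoprime a b) (hc : ¬ l ∣ c)
    (H : a ^ 3 + b ^ 3 = u * l ^ (3 * (n + 1) + 2) * c ^ 3) (hd : l ^ 2 ∣ a + b) :
    ∃ (a' b' c' : R) (u' : Rˣ), IsCoprime a' b' ∧ ¬ l ∣ c' ∧
      a' ^ 3 + b' ^ 3 = u' * l ^ (3 * n + 2) * c' ^ 3 := by
  have h3 : h ^ 3 = 1 := by linear_combination (h - 1) * hh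
  have hl0 := hl.ne_zero
  have hb : ¬ l ∣ b := by
    intro hb
    have ha : l ∣ a := by
      have h1 : l ∣ a + b := (dvd_pow_self l two_ne_zero).trans hd
      exact (dvd_add_left hb).1 h1
    exact hl.not_isUnit (hab.isUnit_of_dvd' ha hb)
  obtain ⟨A, hA⟩ := hd
  obtain ⟨y, hy⟩ : ∃ y, y = l * A + b := ⟨_, rfl⟩
  obtain ⟨z, hz⟩ : ∃ z, z = l * A + (h + 1) * b := ⟨_, rfl⟩
  have hyy : a + h * b = l * y := by rw [hy]; linear_combination hA - b * hlh
  have hzz : a + h ^ 2 * b = l * z := by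
    rw [hz]; linear_combination hA - (h + 1) * b * hlh
  have hly : ¬ l ∣ y := by
    intro hd; rw [hy] at hd
    exact hb ((dvd_add_right (dvd_mul_right l A)).1 hd)
  have hlz : ¬ l ∣ z := by
    intro hd; rw [hz] at hd
    have h2 := (dvd_add_right (dvd_mul_right l A)).1 hd
    apply hb
    have h3 : b = -h * ((h + 1) * b) := by linear_combination (-b) * (-hh)
    rw [h3]; exact h2.mul_left _
  have hprod : a ^ 3 + b ^ 3 = (a + b) * (a + h * b) * (a + h ^ 2 * b) := by
    linear_combination (-(a ^ 2 * b) - a * b ^ 2 * h - b ^ 3 * (h - 1)) * hh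
  have key : (a + b) * y * z = u * l ^ (3 * (n + 1)) * c ^ 3 := by
    apply mul_left_cancel₀ (pow_ne_zero 2 hl0)
    rw [hprod, hyy, hzz] at H
    rw [pow_add] at H
    linear_combination H
  have hx : l ^ (3 * (n + 1)) ∣ a + b := by
    apply hl.pow_dvd_of_dvd_mul_left _ hlz
    apply hl.pow_dvd_of_dvd_mul_left _ hly
    exact ⟨u * c ^ 3, by linear_combination key⟩
  obtain ⟨x, hxx⟩ := hx
  have hxyz : x * y * z = u * c ^ 3 := by
    apply mul_left_cancel₀ (pow_ne_zero (3 * (n + 1)) hl0)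
    rw [hxx] at key
    linear_combination key
  have hlx : ¬ l ∣ x := by
    intro hd
    have : l ∣ u * c ^ 3 := by rw [← hxyz, mul_assoc]; exact hd.mul_right _
    rw [Units.dvd_mul_left] at this
    exact hc (hl.dvd_of_dvd_pow this)
  have cxy : IsCoprime x y := by
    apply cop_aux hl hab hlx hly
    intro p p1 p2
    have q1 : p ∣ a + b := hxx ▸ p1.mul_left _
    have q2 : p ∣ a + h * b := hyy ▸ p2.mul_left _
    refine ⟨?_, ?_⟩
    · rw [show l * a = h * (a + b) - (a + h * b) by rw [hlh]; ring]
      exact dvd_sub (q1.mul_left _) q2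
    · rw [show l * b = (a + h * b) - (a + b) by rw [hlh]; ring]
      exact dvd_sub q2 q1
  have cxz : IsCoprime x z := by
    apply cop_aux hl hab hlx hlz
    intro p p1 p2
    have q1 : p ∣ a + b := hxx ▸ p1.mul_left _
    have q2 : p ∣ a + h ^ 2 * b := hzz ▸ p2.mul_left _
    refine ⟨?_, ?_⟩
    · rw [show l * a = (-h) * (h ^ 2 * (a + b) - (a + h ^ 2 * b)) by
        rw [hlh]; linear_combination (a) * h3]
      exact (dvd_sub (q1.mul_left _) q2).mul_left _
    · rw [show l * b = (-h) * ((a + h ^ 2 * b) - (a + b)) by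
        rw [hlh]; linear_combination b * h3]
      exact (dvd_sub q2 q1).mul_left _
  have cyz : IsCoprime y z := by
    apply cop_aux hl hab hly hlz
    intro p p1 p2
    have q1 : p ∣ a + h * b := hyy ▸ p1.mul_left _
    have q2 : p ∣ a + h ^ 2 * b := hzz ▸ p2.mul_left _
    refine ⟨?_, ?_⟩
    · rw [show l * a = (h * (a + h * b) - (a + h ^ 2 * b)) by
        rw [hlh]; ring]
      exact (dvd_sub (q1.mul_left _) q2)
    · rw [show l * b = (h ^ 2) * ((a + h ^ 2 * b) - (a + h * b)) by
        rw [hlh]; linear_combination (b - b * h) * h3]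
      exact (dvd_sub q2 q1).mul_left _
  have h₁ := cxz.mul_left cyz
  have h₂ : Associated (c ^ 3) (x * y * z) := ⟨u, by rw [hxyz, mul_comm]⟩
  obtain ⟨T, h₃⟩ := exists_associated_pow_of_associated_pow_mul h₁ h₂
  obtain ⟨X, u₁, hX⟩ := exists_associated_pow_of_associated_pow_mul cxy h₃
  obtain ⟨Y, u₂, hY⟩ := exists_associated_pow_of_associated_pow_mul cxy.symm (mul_comm _ x ▸ h₃)
  obtain ⟨Z, u₃, hZ⟩ := exists_associated_pow_of_associated_pow_mul h₁.symm (mul_comm _ z ▸ h₂)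
  have hlX : ¬ l ∣ X := fun hd ↦ hlx (hX ▸ (dvd_mul_of_dvd_left (dvd_pow hd (by decide)) _))
  have hlY : ¬ l ∣ Y := fun hd ↦ hly (hY ▸ (dvd_mul_of_dvd_left (dvd_pow hd (by decide)) _))
  have hlZ : ¬ l ∣ Z := fun hd ↦ hlz (hZ ▸ (dvd_mul_of_dvd_left (dvd_pow hd (by decide)) _))
  have cYZ : IsCoprime Y Z := by
    rw [← IsCoprime.pow_iff (m := 3) (n := 3) (by decide) (by decide),
      ← isCoprime_mul_unit_right_left u₂.isUnit, ← isCoprime_mul_unit_right_right u₃.isUnit,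
      hY, hZ]
    exact cyz
  let η : Rˣ := ⟨h, h ^ 2, by linear_combination h3, by linear_combination h3⟩
  have hη : (η : R) = h := rfl
  have f1 : X ^ 3 * u₁ * l ^ (3 * n + 2) + Y ^ 3 * u₂ * h + Z ^ 3 * u₃ * h ^ 2 = 0 := by
    rw [hX, hY, hZ]
    apply mul_left_cancel₀ hl0
    have e : l ^ (3 * (n + 1)) = l * l ^ (3 * n + 2) := by ring
    rw [e] at hxx
    have : l * (x * l ^ (3 * n + 2) + y * h + z * h ^ 2) =
      (a + b) + h * (a + h * b) + h ^ 2 * (a + h ^ 2 * b) := by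
      rw [hxx, hyy, hzz]; ring
    rw [this]
    linear_combination (a + b + (h ^ 2 - h) * b) * hh
  let u₄ : Rˣ := η * u₃ * u₂⁻¹
  let u₅ : Rˣ := -η ^ 2 * u₁ * u₂⁻¹
  have i2 : (u₂ : R) * (u₂⁻¹ : Rˣ) = 1 := by simp
  have f2 : Y ^ 3 + u₄ * Z ^ 3 = u₅ * l ^ (3 * n + 2) * X ^ 3 := by
    simp only [u₄, u₅, Units.val_mul, Units.val_neg, Units.val_pow_eq_pow_val, hη]
    linear_combination h ^ 2 * ((u₂⁻¹ : Rˣ) : R) * f1 - Y ^ 3 * i2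
      - (Y ^ 3 * u₂ * (u₂⁻¹ : Rˣ) + h * Z ^ 3 * u₃ * (u₂⁻¹ : Rˣ)) * h3
  have hu4 : u₄ = 1 ∨ u₄ = -1 := by
    apply Hu
    have hX2 : l ^ 2 ∣ Y ^ 3 + u₄ * Z ^ 3 := by
      rw [f2]; exact ⟨u₅ * l ^ (3 * n) * X ^ 3, by ring⟩
    rcases Hc Y hlY with HY | HY <;> rcases Hc Z hlZ with HZ | HZ
    · refine ⟨-1, ?_⟩
      convert (hX2.sub HY).sub (HZ.mul_left (u₄ : R)) using 1
      push_cast; ring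
    · refine ⟨1, ?_⟩
      convert (HY.sub hX2).add (HZ.mul_left (u₄ : R)) using 1
      push_cast; ring
    · refine ⟨1, ?_⟩
      convert (hX2.sub HY).sub (HZ.mul_left (u₄ : R)) using 1
      push_cast; ring
    · refine ⟨-1, ?_⟩
      convert (HY.sub hX2).add (HZ.mul_left (u₄ : R)) using 1
      push_cast; ring
  rcases hu4 with h4 | h4
  · refine ⟨Y, Z, X, u₅, cYZ, hlX, ?_⟩
    rw [← f2, h4]; simp
  · refine ⟨Y, -Z, X, u₅, cYZ.neg_right, hlX, ?_⟩
    rw [← f2, h4]; push_cast; ring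

lemma desc {h l : R} (hh : h ^ 2 + h + 1 = 0) (hlh : l = h - 1) (hl : Prime l)
    (Hu : ∀ u : Rˣ, (∃ n : ℤ, l ^ 2 ∣ (u - n : R)) → u = 1 ∨ u = -1)
    (Hc : ∀ x : R, ¬ l ∣ x → l ^ 2 ∣ x ^ 3 - 1 ∨ l ^ 2 ∣ x ^ 3 + 1)
    (n : ℕ) : ∀ (a b c : R) (u : Rˣ), IsCoprime a b → ¬ l ∣ c →
    a ^ 3 + b ^ 3 = u * l ^ (3 * n + 2) * c ^ 3 → False := by
  have h3 : h ^ 3 = 1 := by linear_combination (h - 1) * hh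
  have hl0 := hl.ne_zero
  have hun : IsUnit h := IsUnit.of_mul_eq_one (h ^ 2) (by linear_combination h3)
  induction n with
  | zero =>
    intro a b c u hab hc H
    have hprod : a ^ 3 + b ^ 3 = (a + b) * (a + h * b) * (a + h ^ 2 * b) := by
      linear_combination (-(a ^ 2 * b) - a * b ^ 2 * h - b ^ 3 * (h - 1)) * hh
    have hd : l ∣ a + b := by
      have : l ∣ (a + b) ^ 3 := by
        have e : (a + b) ^ 3 = (a + b) * (a + h * b) * (a + h ^ 2 * b)
          - l * ((a + b) * b * ((a + b) + (h + 1) * (a + h * b))) := by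
          rw [hlh]; ring
        rw [e, ← hprod, H]
        exact dvd_sub ⟨u * l * c ^ 3, by ring⟩ (dvd_mul_right _ _)
      exact hl.dvd_of_dvd_pow this
    obtain ⟨A, hA⟩ := hd
    have : l ∣ u * c ^ 3 := by
      refine ⟨A * (A + b) * (A + (h + 1) * b), ?_⟩
      apply mul_left_cancel₀ (pow_ne_zero 2 hl0)
      have e1 : a + h * b = l * (A + b) := by linear_combination hA - b * hlh
      have e2 : a + h ^ 2 * b = l * (A + (h + 1) * b) := by
        linear_combination hA - (h + 1) * b * hlh
      rw [hprod, hA, e1, e2] at H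
      linear_combination -H
    rw [Units.dvd_mul_left] at this
    exact hc (hl.dvd_of_dvd_pow this)
  | succ n ih =>
    intro a b c u hab hc H
    have hprod : a ^ 3 + b ^ 3 = (a + b) * (a + h * b) * (a + h ^ 2 * b) := by
      linear_combination (-(a ^ 2 * b) - a * b ^ 2 * h - b ^ 3 * (h - 1)) * hh
    have hd : l ∣ a + b := by
      have : l ∣ (a + b) ^ 3 := by
        have e : (a + b) ^ 3 = (a + b) * (a + h * b) * (a + h ^ 2 * b)
          - l * ((a + b) * b * ((a + b) + (h + 1) * (a + h * b))) := by
          rw [hlh]; ring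
        rw [e, ← hprod, H]
        exact dvd_sub ⟨u * l ^ (3 * (n + 1) + 1) * c ^ 3, by ring⟩ (dvd_mul_right _ _)
      exact hl.dvd_of_dvd_pow this
    obtain ⟨A, hA⟩ := hd
    have e1 : a + h * b = l * (A + b) := by linear_combination hA - b * hlh
    have e2 : a + h ^ 2 * b = l * (A + (h + 1) * b) := by
        linear_combination hA - (h + 1) * b * hlh
    have : l ∣ A * (A + b) * (A + (h + 1) * b) := by
      refine ⟨u * l ^ (3 * n + 1) * c ^ 3, ?_⟩
      apply mul_left_cancel₀ (pow_ne_zero 3 hl0)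
      rw [hprod, hA, e1, e2] at H
      linear_combination H
    have fin : ∀ b', IsCoprime a b' → a ^ 3 + b' ^ 3 = u * l ^ (3 * (n + 1) + 2) * c ^ 3 →
        l ^ 2 ∣ a + b' → False := by
      intro b' h1 h2 h3
      obtain ⟨a', b'', c', u', i1, i2, i3⟩ := desc_step hh hlh hl Hu Hc n a b' c u h1 hc h2 h3
      exact ih a' b'' c' u' i1 i2 i3
    rcases hl.dvd_or_dvd this with h' | h'
    · rcases hl.dvd_or_dvd h' with h' | h'
      · exact fin b hab H (by rw [hA, sq]; exact mul_dvd_mul_left _ h')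
      · refine fin (h * b) ((isCoprime_mul_unit_left_right hun _ _).2 hab) ?_
          (by rw [e1, sq]; exact mul_dvd_mul_left _ h')
        rw [← H]; linear_combination b ^ 3 * h3
    · refine fin (h ^ 2 * b) ((isCoprime_mul_unit_left_right (hun.pow 2) _ _).2 hab) ?_
          (by rw [e2, sq]; exact mul_dvd_mul_left _ h')
      rw [← H]; linear_combination b ^ 3 * (h ^ 3 + 1) * h3

end descent
end HJ
end

section
namespace HJ
open NumberField IsCyclotomicExtension.Rat.Three in
lemma partD_gen (K : Type) [Field K] [NumberField K] [IsCyclotomicExtension {3} ℚ K]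
    (a b c : ℤ) (hab : IsCoprime a b) (hc : c ≠ 0) (H : a ^ 3 + b ^ 3 = 3 * c ^ 3) :
    False := by
  have hζ := IsCyclotomicExtension.zeta_spec 3 ℚ K
  have : IsPrincipalIdealRing (𝓞 K) := IsCyclotomicExtension.Rat.three_pid K
  have hh : hζ.toInteger ^ 2 + hζ.toInteger + 1 = 0 := eta_sq_add_eta_add_one hζ
  have hl : Prime (hζ.toInteger - 1) := hζ.zeta_sub_one_prime'
  generalize hh' : hζ.toInteger = h at *
  generalize hll : h - 1 = l at *
  have h3 : h ^ 3 = 1 := by linear_combination (h - 1) * hh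
  have hc' : ((c : ℤ) : 𝓞 K) ≠ 0 := by exact_mod_cast hc
  obtain ⟨n, c', hc1, hc2⟩ := WfDvdMonoid.max_power_factor hc' hl.irreducible
  let v : (𝓞 K)ˣ := ⟨-h ^ 2, -h, by linear_combination h3, by linear_combination h3⟩
  refine desc hh hll.symm hl ?_ ?_ n (a : 𝓞 K) (b : 𝓞 K) c' v hab.intCast hc1 ?_
  · intro u hu
    apply eq_one_or_neg_one_of_unit_of_congruent hζ
    rw [hh', hll]; exact hu
  · intro x hx
    have := lambda_pow_four_dvd_cube_sub_one_or_add_one_of_lambda_not_dvd hζ (x := x)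
      (by rw [hh', hll]; exact hx)
    rw [hh', hll] at this
    exact this.imp (fun t => (pow_dvd_pow l (by norm_num)).trans t)
      (fun t => (pow_dvd_pow l (by norm_num)).trans t)
  · have e : (a : 𝓞 K) ^ 3 + (b : 𝓞 K) ^ 3 = 3 * (c : 𝓞 K) ^ 3 := by exact_mod_cast H
    rw [e, hc2]
    have e3 : (3 : 𝓞 K) = (v : 𝓞 K) * l ^ 2 := by
      change (3 : 𝓞 K) = (-h ^ 2) * l ^ 2
      rw [← hll]; linear_combination (-(h ^ 2) + 3 * h - 3) * (-hh)
    rw [e3]; ring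

lemma partD_int (a b c : ℤ) (hab : IsCoprime a b) (hc : c ≠ 0) (H : a ^ 3 + b ^ 3 = 3 * c ^ 3) :
    False := by
  have h1 : IsCyclotomicExtension {3} ℚ (CyclotomicField 3 ℚ) := by
    have h := CyclotomicField.isCyclotomicExtension 3 ℚ
    have e : (DivisionRing.toRatAlgebra : Algebra ℚ (CyclotomicField 3 ℚ)) =
      CyclotomicField.algebra 3 ℚ := Subsingleton.elim _ _
    rw [e]; exact h
  have : NumberField (CyclotomicField 3 ℚ) := IsCyclotomicExtension.numberField {3} ℚ _
  exact partD_gen (CyclotomicField 3 ℚ) a b c hab hc H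

lemma partD (w z : ℚ) (hz : z ≠ 0) (H : 1 + w ^ 3 = 3 * z ^ 3) : False := by
  -- integers with common denominator
  obtain ⟨p, q, r, hr, hw, hz'⟩ : ∃ p q r : ℤ, r ≠ 0 ∧ w = p / r ∧ z = q / r := by
    refine ⟨w.num * z.den, z.num * w.den, w.den * z.den, by simp, ?_, ?_⟩
    · push_cast
      rw [mul_div_mul_right _ _ (by simp)]; exact (Rat.num_div_den w).symm
    · push_cast
      rw [mul_comm (w.den : ℚ), mul_div_mul_right _ _ (by simp)]; exact (Rat.num_div_den z).symm
  have hr' : (r : ℚ) ≠ 0 := by exact_mod_cast hr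
  have hq : q ≠ 0 := by rintro rfl; simp at hz'; exact hz hz'
  have E : r ^ 3 + p ^ 3 = 3 * q ^ 3 := by
    rw [hw, hz'] at H
    field_simp at H
    exact_mod_cast H
  obtain ⟨g, hg0, r', p', hrp, hr1, hp1⟩ : ∃ g : ℤ, g ≠ 0 ∧ ∃ r' p' : ℤ, IsCoprime r' p' ∧
      r = g * r' ∧ p = g * p' := by
    have hne : r ≠ 0 ∨ p ≠ 0 := Or.inl hr
    have hpos : 0 < Int.gcd r p := Int.gcd_pos_of_ne_zero_left _ hr
    obtain ⟨r', p', h1, h2, h3⟩ := Int.exists_gcd_one (m := r) (n := p) hpos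
    exact ⟨Int.gcd r p, by exact_mod_cast hpos.ne', r', p', Int.isCoprime_iff_gcd_eq_one.2 h1,
      by rw [mul_comm]; exact h2, by rw [mul_comm]; exact h3⟩
  -- g^3 ∣ 3 q^3 hence g ∣ q rationally
  have hgq : g ∣ q := by
    have h1 : g ^ 3 ∣ 3 * q ^ 3 := by
      rw [← E, hr1, hp1]; exact ⟨r' ^ 3 + p' ^ 3, by ring⟩
    have hg1 : ((q : ℚ) / g) ^ 3 * 3 = (r' ^ 3 + p' ^ 3 : ℤ) := by
      have hg' : (g : ℚ) ≠ 0 := by exact_mod_cast hg0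
      rw [hr1, hp1] at E
      have E' : ((g : ℚ) * r') ^ 3 + (g * p') ^ 3 = 3 * q ^ 3 := by exact_mod_cast E
      push_cast
      field_simp
      linear_combination -E'
    -- t = q/g, 3 t^3 integer so (3t)^3 integer; denominators
    obtain ⟨k, hk⟩ := h1
    -- factor out gcd of g and q
    have hpos : 0 < Int.gcd g q := Int.gcd_pos_of_ne_zero_left _ hg0
    obtain ⟨g', q', i1, i2, i3⟩ := Int.exists_gcd_one (m := g) (n := q) hpos
    generalize ((Int.gcd g q : ℕ) : ℤ) = G at i2 i3
    have hG : G ≠ 0 := by rintro rfl; simp at i2; exact hg0 i2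
    have e : 3 * q' ^ 3 = g' ^ 3 * k := by
      apply mul_left_cancel₀ (pow_ne_zero 3 hG)
      rw [i2, i3] at hk; linear_combination hk
    have cp : IsCoprime (g' ^ 3) (q' ^ 3) := (Int.isCoprime_iff_gcd_eq_one.2 i1).pow
    have d3 : g' ^ 3 ∣ 3 := cp.dvd_of_dvd_mul_right ⟨k, e⟩
    have hu : g' ∣ 1 := by
      have hb := Int.le_of_dvd (by norm_num) d3
      have hb' := Int.le_of_dvd (by norm_num) ((neg_dvd).2 d3)
      have : -2 < g' := by nlinarith [sq_nonneg g', sq_nonneg (g' + 1)]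
      have : g' < 2 := by nlinarith [sq_nonneg g', sq_nonneg (g' - 1)]
      interval_cases g' <;> simp_all
    rw [i2, i3]
    exact mul_dvd_mul_right (hu.trans (one_dvd _)) G
  obtain ⟨q', rfl⟩ := hgq
  refine partD_int r' p' q' hrp (by rintro rfl; simp at hq) ?_
  apply mul_left_cancel₀ (pow_ne_zero 3 hg0)
  rw [hr1, hp1] at E
  linear_combination E
end HJ
end

section
namespace HJ

lemma w_eq (N g M : ℤ) (hN : 1 < N) (h : M ^ 3 - 3 * N * g ^ 2 * M + N * (N + 1) * g ^ 3 = (N - 1) ^ 2) :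
    ∃ w : ℚ, 1 + w ^ 3 = N * (g + w) ^ 3 := by
  have hN' : (N : ℚ) - 1 ≠ 0 := by
    have : (1 : ℚ) < N := by exact_mod_cast hN
    linarith
  have h' : (M : ℚ) ^ 3 - 3 * N * g ^ 2 * M + N * (N + 1) * g ^ 3 = (N - 1) ^ 2 := by exact_mod_cast h
  refine ⟨(M - N * g) / (N - 1), ?_⟩
  obtain ⟨w, hw⟩ : ∃ w : ℚ, w = (M - N * g) / (N - 1) := ⟨_, rfl⟩
  rw [← hw]
  have hM : (M : ℚ) = (N - 1) * w + N * g := by rw [hw]; field_simp; ring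
  rw [hM] at h'
  apply mul_left_cancel₀ (pow_ne_zero 2 hN')
  linear_combination -h'

lemma partB_int (b d : ℕ) (hb : 1 ≤ b) (hd : 1 ≤ d) (M : ℤ)
    (h : M ^ 3 - 3 * 9 ^ b * (9 ^ d) ^ 2 * M + 9 ^ b * (9 ^ b + 1) * (9 ^ d) ^ 3 = (9 ^ b - 1) ^ 2) :
    False := by
  have hN1 : (9 : ℤ) ≤ 9 ^ b := by
    calc (9 : ℤ) = 9 ^ 1 := by norm_num
      _ ≤ 9 ^ b := pow_le_pow_right₀ (by norm_num) hb
  have hg1 : (9 : ℤ) ≤ 9 ^ d := by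
    calc (9 : ℤ) = 9 ^ 1 := by norm_num
      _ ≤ 9 ^ d := pow_le_pow_right₀ (by norm_num) hd
  have hNq : (9 : ℚ) ≤ 9 ^ b := by exact_mod_cast hN1
  have hgq : (9 : ℚ) ≤ 9 ^ d := by exact_mod_cast hg1
  have hcase : (∃ f, b = 3 * f) ∨ (∃ f, b = 3 * f + 1) ∨ ∃ f, b = 3 * f + 2 := by
    have : b % 3 = 0 ∨ b % 3 = 1 ∨ b % 3 = 2 := by omega
    rcases this with h | h | h
    · exact Or.inl ⟨b / 3, by omega⟩
    · exact Or.inr (Or.inl ⟨b / 3, by omega⟩)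
    · exact Or.inr (Or.inr ⟨b / 3, by omega⟩)
  have main : ∀ w : ℚ, 1 + w ^ 3 = (9 ^ b : ℚ) * (9 ^ d + w) ^ 3 → (9 : ℚ) ^ d + w ≠ 0 ∧ w ≠ 0 := by
    intro w hw
    refine ⟨fun h0 => ?_, fun h0 => ?_⟩
    · have : w = -9 ^ d := by linarith
      rw [h0, this] at hw
      have h2 : (1 : ℚ) < (9 ^ d) ^ 3 := one_lt_pow₀ (by linarith) (by norm_num)
      linarith [hw, (Odd.neg_pow (by decide : Odd 3) ((9 : ℚ) ^ d))]
    · rw [h0] at hw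
      have h2 : (1 : ℚ) < (9 ^ d) ^ 3 := one_lt_pow₀ (by linarith) (by norm_num)
      simp only [add_zero] at hw
      nlinarith
  rcases hcase with ⟨f, rfl⟩ | ⟨f, rfl⟩ | ⟨f, rfl⟩
  · obtain ⟨w, hw⟩ := w_eq (9 ^ (3 * f)) (9 ^ d) M (by linarith) (by linear_combination h)
    push_cast at hw
    obtain ⟨h1, h2⟩ := main w hw
    have flt := fermatLastTheoremFor_iff_rat.1 fermatLastTheoremThree
    refine flt 1 w (9 ^ f * (9 ^ d + w)) one_ne_zero h2 (mul_ne_zero (by positivity) h1) ?_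
    rw [mul_pow, ← pow_mul, mul_comm f 3, ← hw]; ring
  · rcases Nat.eq_zero_or_pos f with rfl | hf
    · -- N = 9
      simp only [mul_zero, zero_add, pow_one] at h
      obtain ⟨g, hg⟩ : ∃ g : ℤ, g = 9 ^ d := ⟨_, rfl⟩
      rw [← hg] at h hg1
      have hM3 : (3 : ℤ) ∣ M - 1 := M_mod3 9 g M (by norm_num) (by linear_combination h)
      have hdv : (3 : ℤ) ^ (4 * d + 2 + 1) ∣ M ^ 3 - 4 ^ 3 := by
        have : (3 : ℤ) ^ (4 * d + 2 + 1) = 27 * g ^ 2 := by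
          rw [hg, show (9 : ℤ) = 3 ^ 2 by norm_num, ← pow_mul, ← pow_mul]; ring
        rw [this]
        have h9 : (9 : ℤ) ∣ g := by rw [hg]; exact dvd_pow_self _ (by omega)
        obtain ⟨k, hk⟩ := h9
        exact ⟨M - 30 * k, by linear_combination h - 90 * g ^ 2 * hk⟩
      have h4 := cube_sub_dvd M 4 (4 * d + 2) hM3 (by norm_num) hdv
      have e : (3 : ℤ) ^ (4 * d + 2) = 9 * g ^ 2 := by
        rw [hg, show (9 : ℤ) = 3 ^ 2 by norm_num, ← pow_mul, ← pow_mul]; ring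
      rw [e] at h4
      have hM7 : M < 7 * g := by
        by_contra hc
        push Not at hc
        nlinarith [mul_self_nonneg M, mul_le_mul hc hc (by linarith) (by linarith), mul_pos (show (0:ℤ) < g by linarith) (show (0:ℤ) < g by linarith), mul_nonneg (show (0:ℤ) ≤ M - 7 * g by linarith) (show (0:ℤ) ≤ M * M - 27 * g * g by nlinarith [mul_le_mul hc hc (by linarith) (by linarith)])]
      have hM8 : -(7 * g) < M := by
        by_contra hc
        push Not at hc
        obtain ⟨m, hm⟩ : ∃ m : ℤ, m = -M := ⟨_, rfl⟩
        have hmm : M = -m := by linarith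
        rw [hmm] at h hc
        have hc' : 7 * g ≤ m := by linarith
        have h1 : 49 * (g * g) ≤ m * m := by nlinarith
        have h2 : 0 ≤ (m - 7 * g) * (m * m - 27 * (g * g)) := mul_nonneg (by linarith) (by nlinarith)
        have h3 : 0 ≤ g * (m * m - 49 * (g * g)) := mul_nonneg (by linarith) (by linarith)
        nlinarith [pow_pos (show (0:ℤ) < g by linarith) 3]
      have hM4 : M - 4 = 0 := by
        apply Int.eq_zero_of_abs_lt_dvd h4
        rw [abs_lt]; constructor <;> nlinarith
      have : M = 4 := by linarith
      rw [this] at h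
      nlinarith [pow_pos (show (0:ℤ) < g by linarith) 2]
    · refine partC f d hf hd M ?_
      have e : (9 : ℤ) ^ (3 * f + 1) = 9 * (9 ^ f) ^ 3 := by rw [pow_succ, ← pow_mul]; ring
      rw [e] at h
      linear_combination h
  · obtain ⟨w, hw⟩ := w_eq (9 ^ (3 * f + 2)) (9 ^ d) M (by linarith) (by linear_combination h)
    push_cast at hw
    obtain ⟨h1, h2⟩ := main w hw
    refine partD w (3 * 9 ^ f * (9 ^ d + w)) (mul_ne_zero (by positivity) h1) ?_
    rw [hw, mul_pow, mul_pow, ← pow_mul, mul_comm f 3, pow_add]; ring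

lemma strip3 (b : ℕ) (hb : 1 ≤ b) (q : ℤ) (hq : ¬ (3 : ℤ) ∣ q) :
    ∀ (d c e : ℕ) (p : ℤ), c < 3 * d → 3 ^ c * q ^ 3 + p ^ 3 = 9 ^ b * (3 ^ (c + e) * q + p) ^ 3 →
    ∃ d' p', c = 3 * d' ∧ p = 3 ^ d' * p' := by
  have hp3 : Prime (3 : ℤ) := Int.prime_three
  have h9 : (9 : ℤ) ∣ 9 ^ b := dvd_pow_self _ (by omega)
  obtain ⟨B, hB⟩ := h9
  intro d
  induction d with
  | zero => intro c e p hc; omega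
  | succ d ih =>
    intro c e p hc H
    rcases Nat.eq_zero_or_pos c with rfl | hc0
    · exact ⟨0, p, rfl, by simp⟩
    have h3p : (3 : ℤ) ∣ p := by
      apply hp3.dvd_of_dvd_pow (n := 3)
      have : p ^ 3 = 9 ^ b * (3 ^ (c + e) * q + p) ^ 3 - 3 ^ c * q ^ 3 := by linarith
      rw [this, hB]
      refine dvd_sub ⟨3 * B * (3 ^ (c + e) * q + p) ^ 3, by ring⟩ ?_
      exact (dvd_pow_self 3 (by omega)).mul_right _
    obtain ⟨p1, rfl⟩ := h3p
    by_cases hc3 : 3 ≤ c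
    · obtain ⟨c', rfl⟩ : ∃ c', c = c' + 3 := ⟨c - 3, by omega⟩
      obtain ⟨d', p', h1, h2⟩ := ih c' (e + 2) p1 (by omega) (by
        have e27 : (27 : ℤ) ≠ 0 := by norm_num
        apply mul_left_cancel₀ e27
        rw [pow_add] at H
        rw [show c' + 3 + e = c' + (e + 2) + 1 by ring, pow_succ] at H
        linear_combination H)
      exact ⟨d' + 1, p', by omega, by rw [h2]; ring⟩
    · exfalso
      apply hq
      apply hp3.dvd_of_dvd_pow (n := 3)
      obtain ⟨c', hc'⟩ : ∃ c', c = c' + 1 := ⟨c - 1, by omega⟩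
      have e1 : (3 : ℤ) ^ (c + e) = 3 * 3 ^ (c' + e) := by rw [hc']; ring
      rw [e1] at H
      have H27 : (27 : ℤ) ∣ 3 ^ c * q ^ 3 := 
        ⟨9 ^ b * (3 ^ (c' + e) * q + p1) ^ 3 - p1 ^ 3, by linear_combination H⟩
      have H27' : (27 : ℤ) ∣ 9 * q ^ 3 := by
        have : c = 1 ∨ c = 2 := by omega
        rcases this with rfl | rfl
        · obtain ⟨k, hk⟩ := H27
          exact ⟨3 * k, by linarith⟩
        · simpa using H27
      obtain ⟨k, hk⟩ := H27'
      exact ⟨k, by linarith⟩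

/-- Part B. -/
lemma partB (b c : ℕ) (hb : 1 ≤ b) (hc : 1 ≤ c) (u : ℚ)
    (h : 3 ^ c + u ^ 3 = 9 ^ b * (3 ^ c + u) ^ 3) : False := by
  have hq0 : (u.den : ℚ) ≠ 0 := by simp
  have hu : u = u.num / u.den := (Rat.num_div_den u).symm
  have hcop : IsCoprime (u.den : ℤ) u.num := by
    have := Rat.isCoprime_num_den u
    exact this.symm
  obtain ⟨q, hq⟩ : ∃ q : ℤ, q = u.den := ⟨_, rfl⟩
  obtain ⟨p, hp⟩ : ∃ p : ℤ, p = u.num := ⟨_, rfl⟩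
  have hq1 : (q : ℚ) ≠ 0 := by rw [hq]; exact_mod_cast hq0
  have hu' : u = p / q := by rw [hq, hp]; exact_mod_cast hu
  rw [← hq, ← hp] at hcop
  have H : 3 ^ c * q ^ 3 + p ^ 3 = 9 ^ b * (3 ^ c * q + p) ^ 3 := by
    rw [hu'] at h
    field_simp at h
    have h' : (3 : ℚ) ^ c * q ^ 3 + p ^ 3 = 9 ^ b * (3 ^ c * q + p) ^ 3 := by
      linear_combination h
    exact_mod_cast h'
  have hqN : q ∣ 9 ^ b - 1 := by
    have : q ∣ (9 ^ b - 1) * p ^ 3 := by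
      refine ⟨3 ^ c * q ^ 2 - 9 ^ b * (3 ^ c * ((3 ^ c * q) ^ 2 + 3 * (3 ^ c * q) * p + 3 * p ^ 2)), ?_⟩
      linear_combination -H
    exact (hcop.pow_right (n := 3)).dvd_of_dvd_mul_right this
  obtain ⟨r, hr⟩ := hqN
  have h3q : ¬ (3 : ℤ) ∣ q := by
    intro hd
    have h1 : (3 : ℤ) ∣ 9 ^ b - 1 := by rw [hr]; exact hd.mul_right _
    have h2 : (3 : ℤ) ∣ 9 ^ b := (show (3 : ℤ) ∣ 9 by norm_num).trans (dvd_pow_self _ (by omega))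
    have h3 : (3 : ℤ) ∣ 1 := by
      have := dvd_sub h2 h1
      simpa using this
    norm_num at h3
  obtain ⟨d, p', hd, hp'⟩ := strip3 b hb q h3q (c + 1) c 0 p (by omega) (by simpa using H)
  have hd1 : 1 ≤ d := by omega
  subst hd
  have H' : q ^ 3 + p' ^ 3 = 9 ^ b * (9 ^ d * q + p') ^ 3 := by
    have e27 : ((3 : ℤ) ^ d) ^ 3 ≠ 0 := by positivity
    apply mul_left_cancel₀ e27
    rw [hp'] at H
    have e1 : (3 : ℤ) ^ (3 * d) = (3 ^ d) ^ 3 := by rw [mul_comm, pow_mul]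
    have e2 : (9 : ℤ) ^ d = (3 ^ d) ^ 2 := by rw [← pow_mul, mul_comm, pow_mul]; norm_num
    rw [e1] at H
    rw [e2]
    linear_combination H
  refine partB_int b d hb hd1 (p' * r + 9 ^ b * 9 ^ d) ?_
  have hq2 : q ^ 3 ≠ 0 := pow_ne_zero 3 (by exact_mod_cast hq1)
  apply mul_left_cancel₀ hq2
  generalize (9 : ℤ) ^ b = N at *
  generalize (9 : ℤ) ^ d = g at *
  have hN : N = q * r + 1 := by linarith
  rw [hN] at H' ⊢
  linear_combination -(q * r) ^ 2 * H'

end HJ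
end

section
namespace HJ
open Polynomial in
lemma quad_root {K : Type*} [Field K] [Algebra ℚ K] (hK : Module.finrank ℚ K = 2)
    (b c : ℕ) (hb : 1 ≤ b) (u : K)
    (h : 3 ^ c + u ^ 3 = 9 ^ b * (3 ^ c + u) ^ 3) :
    ∃ v : ℚ, 3 ^ c + v ^ 3 = 9 ^ b * (3 ^ c + v) ^ 3 := by
  have hfd : FiniteDimensional ℚ K := Module.finite_of_finrank_pos (by omega)
  have hN : (1 : ℚ) - 9 ^ b ≠ 0 := by
    have : (1 : ℚ) < 9 ^ b := one_lt_pow₀ (by norm_num) (by omega)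
    linarith
  obtain ⟨f, hf⟩ : ∃ f : ℚ[X], f = C (1 - 9 ^ b) * X ^ 3 + C (- 9 ^ b * 3 * 3 ^ c) * X ^ 2
     + C (- 9 ^ b * 3 * (3 ^ c) ^ 2) * X + C (3 ^ c - 9 ^ b * (3 ^ c) ^ 3) := ⟨_, rfl⟩
  have hdeg : f.natDegree = 3 := by rw [hf]; exact natDegree_cubic hN
  have hev : ∀ v : ℚ, f.eval v = 3 ^ c + v ^ 3 - 9 ^ b * (3 ^ c + v) ^ 3 := by
    intro v; rw [hf]; simp; ring
  have hau : aeval u f = 0 := by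
    have : aeval u f = 3 ^ c + u ^ 3 - 9 ^ b * (3 ^ c + u) ^ 3 := by
      rw [hf]; simp; ring
    rw [this, h, sub_self]
  have hint : IsIntegral ℚ u := Algebra.IsIntegral.isIntegral u
  have hm1 : (minpoly ℚ u).natDegree ≤ 2 := hK ▸ minpoly.natDegree_le u
  have hm0 : 0 < (minpoly ℚ u).natDegree := minpoly.natDegree_pos hint
  obtain ⟨g, hg⟩ := minpoly.dvd ℚ u hau
  have hf0 : f ≠ 0 := by intro h; rw [h] at hdeg; simp at hdeg
  have hm : minpoly ℚ u ≠ 0 := minpoly.ne_zero hint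
  have hg0 : g ≠ 0 := by rintro rfl; simp at hg; exact hf0 hg
  have hd : (minpoly ℚ u).natDegree + g.natDegree = 3 := by
    rw [← hdeg, hg, natDegree_mul hm hg0]
  have : ∃ v, f.IsRoot v := by
    by_cases h1 : (minpoly ℚ u).natDegree = 1
    · obtain ⟨v, hv⟩ := exists_root_of_degree_eq_one
        ((degree_eq_iff_natDegree_eq_of_pos one_pos).2 h1)
      exact ⟨v, by rw [hg]; exact root_mul_right_of_isRoot _ hv⟩
    · obtain ⟨v, hv⟩ := exists_root_of_degree_eq_one
        ((degree_eq_iff_natDegree_eq_of_pos (p := g) one_pos).2 (by omega))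
      exact ⟨v, by rw [hg]; exact root_mul_left_of_isRoot _ hv⟩
  obtain ⟨v, hv⟩ := this
  refine ⟨v, ?_⟩
  have := hev v
  rw [hv.eq_zero] at this
  linarith

lemma partA5 {K : Type*} [Field K] [Algebra ℚ K] (hK : Module.finrank ℚ K = 2)
    (k₁ k₂ k₃ : ℕ) (h₁ : k₁ > k₂) (h₂ : k₂ > k₃) (C1 C2 C3 : K)
    (hne : C1 ≠ 0 ∨ C2 ≠ 0 ∨ C3 ≠ 0)
    (hs : 3 ^ k₁ * C1 + 3 ^ k₂ * C2 + 3 ^ k₃ * C3 = 0)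
    (hs3 : 3 ^ k₁ * C1 ^ 3 + 3 ^ k₂ * C2 ^ 3 + 3 ^ k₃ * C3 ^ 3 = 0) : False := by
  have hchar : CharZero K := algebraRat.charZero K
  obtain ⟨b, hb, rfl⟩ : ∃ b, 1 ≤ b ∧ k₂ = k₃ + b := ⟨k₂ - k₃, by omega, by omega⟩
  obtain ⟨c, hc, rfl⟩ : ∃ c, 1 ≤ c ∧ k₁ = k₃ + b + c := ⟨k₁ - (k₃ + b), by omega, by omega⟩
  have h30 : (3 : K) ≠ 0 := by norm_num
  have e1 : C3 = - 3 ^ b * (3 ^ c * C1 + C2) := by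
    apply mul_left_cancel₀ (pow_ne_zero k₃ h30)
    rw [pow_add, pow_add] at hs
    linear_combination hs
  have e2 : 3 ^ c * C1 ^ 3 + C2 ^ 3 = 9 ^ b * (3 ^ c * C1 + C2) ^ 3 := by
    apply mul_left_cancel₀ (mul_ne_zero (pow_ne_zero k₃ h30) (pow_ne_zero b h30))
    rw [e1, pow_add, pow_add] at hs3
    have e9 : (9 : K) ^ b = (3 ^ b) ^ 2 := by rw [← pow_mul, mul_comm, pow_mul]; norm_num
    rw [e9]
    linear_combination hs3
  by_cases hC1 : C1 = 0
  · subst hC1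
    have hN : (1 : K) - 9 ^ b ≠ 0 := by
      have : (1 : ℕ) < 9 ^ b := Nat.one_lt_pow (by omega) (by norm_num)
      intro h
      have h' : ((9 ^ b : ℕ) : K) = (1 : ℕ) := by push_cast; linear_combination -h
      have := Nat.cast_injective (R := K) h'
      omega
    have : C2 ^ 3 = 0 := by
      have h0 : (1 - 9 ^ b) * C2 ^ 3 = 0 := by linear_combination e2
      exact (mul_eq_zero.1 h0).resolve_left hN
    have hC2 : C2 = 0 := by simpa using this
    subst hC2
    simp at e1
    simp [e1] at hne
  · obtain ⟨v, hv⟩ := quad_root hK b c hb (C2 / C1) (by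
      field_simp
      linear_combination e2)
    exact partB b c hb hc v hv

/-- combinatorial step -/
lemma partA4 {K : Type*} [Field K] [Algebra ℚ K] (hK : Module.finrank ℚ K = 2)
    (k : Fin 3 → ℕ) (h₁ : k 0 > k 1) (h₂ : k 1 > k 2)
    (c : (Σ b : Fin 3, (Fin (k b) → ZMod 3)) → K) (hne : ∃ i, c i ≠ 0)
    (z : ∀ b : Fin 3, (Fin (k b) → ZMod 3) → K) (hz : ∀ b v, z b v ^ 3 = 1)
    (hsh : ∀ b v w, c ⟨b, w + v⟩ = z b v * c ⟨b, w⟩)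
    (hsh' : ∀ b v b' w, b' ≠ b → c ⟨b', w⟩ = z b v * c ⟨b', w⟩)
    (hs : ∑ i, c i = 0) (hs3 : ∑ i, c i ^ 3 = 0) : False := by
  have hchar : CharZero K := algebraRat.charZero K
  have hc0 : ∀ b w, c ⟨b, w⟩ = z b w * c ⟨b, 0⟩ := by
    intro b w; simpa using hsh b w 0
  have hcard : ∀ b, Fintype.card (Fin (k b) → ZMod 3) = 3 ^ k b := by intro b; simp
  have hs3' : ∑ b : Fin 3, 3 ^ k b * c ⟨b, 0⟩ ^ 3 = 0 := by
    rw [Fintype.sum_sigma] at hs3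
    rw [← hs3]
    refine Finset.sum_congr rfl fun b _ => ?_
    have : ∀ w, c ⟨b, w⟩ ^ 3 = c ⟨b, 0⟩ ^ 3 := by
      intro w; rw [hc0, mul_pow, hz, one_mul]
    simp only [this, Finset.sum_const, Finset.card_univ, hcard, nsmul_eq_mul]
    push_cast; rfl
  obtain ⟨⟨b₀, w₀⟩, hb₀⟩ := hne
  have hb0 : c ⟨b₀, 0⟩ ≠ 0 := by
    intro h; apply hb₀; rw [hc0, h, mul_zero]
  by_cases hone : ∃ b₁, b₁ ≠ b₀ ∧ c ⟨b₁, 0⟩ ≠ 0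
  · obtain ⟨b₁, hb10, hb1⟩ := hone
    have hz1 : ∀ b v, z b v = 1 := by
      intro b v
      by_cases hb : b = b₀
      · have := hsh' b v b₁ 0 (by rw [hb]; exact hb10)
        have h' : (z b v - 1) * c ⟨b₁, 0⟩ = 0 := by linear_combination -this
        exact sub_eq_zero.1 ((mul_eq_zero.1 h').resolve_right hb1)
      · have := hsh' b v b₀ 0 (fun h => hb h.symm)
        have h' : (z b v - 1) * c ⟨b₀, 0⟩ = 0 := by linear_combination -this
        exact sub_eq_zero.1 ((mul_eq_zero.1 h').resolve_right hb0)
    have hs' : ∑ b : Fin 3, 3 ^ k b * c ⟨b, 0⟩ = 0 := by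
      rw [Fintype.sum_sigma] at hs
      rw [← hs]
      refine Finset.sum_congr rfl fun b _ => ?_
      have : ∀ w, c ⟨b, w⟩ = c ⟨b, 0⟩ := by
        intro w; rw [hc0, hz1, one_mul]
      simp only [this, Finset.sum_const, Finset.card_univ, hcard, nsmul_eq_mul]
      push_cast; rfl
    rw [Fin.sum_univ_three] at hs' hs3'
    refine partA5 hK (k 0) (k 1) (k 2) h₁ h₂ (c ⟨0, 0⟩) (c ⟨1, 0⟩) (c ⟨2, 0⟩) ?_ hs' hs3'
    by_contra hcon
    push Not at hcon
    obtain ⟨q0, q1, q2⟩ := hcon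
    fin_cases b₀
    · exact hb0 q0
    · exact hb0 q1
    · exact hb0 q2
  · push Not at hone
    rw [Finset.sum_eq_single b₀] at hs3'
    · have h30 : (3 : K) ≠ 0 := by norm_num
      exact (mul_ne_zero (pow_ne_zero _ h30) (pow_ne_zero _ hb0)) hs3'
    · intro b _ hb; rw [hone b hb]; simp
    · simp
end HJ
end

section
namespace HJ
open MvPolynomial

lemma lead_aux {σ K J : Type*} [Finite σ] [Field K] [Fintype J] (Q : J → MvPolynomial σ K)
    (hne : ∃ i, Q i ≠ 0) (hs : ∑ i, Q i = 0) (hs3 : ∑ i, Q i ^ 3 = 0) :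
    ∃ m : σ →₀ ℕ, (∃ i, coeff m (Q i) ≠ 0) ∧ ∑ i, coeff m (Q i) = 0 ∧
      ∑ i, coeff m (Q i) ^ 3 = 0 := by
  classical
  let lo : LinearOrder σ := LinearOrder.lift' (Finite.equivFin σ) (Equiv.injective _)
  have wf : WellFoundedGT σ := Finite.to_wellFoundedGT
  let M : MonomialOrder σ := MonomialOrder.lex
  obtain ⟨i₀, hi₀⟩ := hne
  obtain ⟨i₁, h1, h2⟩ := Finset.exists_max_image (Finset.univ.filter (fun i => Q i ≠ 0))
    (fun i => M.toSyn (M.degree (Q i))) ⟨i₀, by simpa using hi₀⟩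
  have hi1 : Q i₁ ≠ 0 := by simpa using h1
  have hle : ∀ i, M.toSyn (M.degree (Q i)) ≤ M.toSyn (M.degree (Q i₁)) := by
    intro i
    by_cases h : Q i = 0
    · rw [h, M.degree_zero, map_zero]; exact M.zero_le _
    · exact h2 i (by simpa using h)
  refine ⟨M.degree (Q i₁), ⟨i₁, (M.coeff_degree_ne_zero_iff).2 hi1⟩, ?_, ?_⟩
  · rw [← coeff_sum, hs, coeff_zero]
  · have key : ∀ i, coeff (M.degree (Q i₁)) (Q i) ^ 3 =
        coeff (M.degree (Q i₁) + M.degree (Q i₁) + M.degree (Q i₁)) (Q i ^ 3) := by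
      intro i
      rw [pow_succ (Q i) 2, sq (Q i), M.coeff_mul_of_add_of_degree_le _ (hle i),
        M.coeff_mul_of_add_of_degree_le (hle i) (hle i)]
      · ring
      · refine M.degree_mul_le.trans ?_
        rw [map_add, map_add]
        exact add_le_add (hle i) (hle i)
    simp only [key]
    rw [← coeff_sum, hs3, coeff_zero]

lemma coeff_scale {σ K : Type*} [Field K] (a : σ → K) (q : MvPolynomial σ K) (m : σ →₀ ℕ) :
    coeff m (aeval (fun i => C (a i) * X i) q : MvPolynomial σ K) =
      (m.prod fun i n => a i ^ n) * coeff m q := by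
  classical
  induction q using MvPolynomial.induction_on' with
  | add p q hp hq => rw [map_add, coeff_add, coeff_add, hp, hq, mul_add]
  | monomial s c =>
    rw [aeval_monomial, algebraMap_eq]
    have : (s.prod fun i k => (C (a i) * X i : MvPolynomial σ K) ^ k) =
        C (s.prod fun i k => a i ^ k) * monomial s 1 := by
      rw [monomial_eq (s := s) (a := 1)]
      simp only [Finsupp.prod, mul_pow, Finset.prod_mul_distrib, map_prod, map_pow, map_one,
        one_mul]
    rw [this, coeff_C_mul, coeff_C_mul, coeff_monomial, coeff_monomial]
    split_ifs with h
    · subst h; ring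
    · simp

lemma char_orth {K : Type*} [Field K] [CharZero K] {ζ : K} (hζ : IsPrimitiveRoot ζ 3) (k : ℕ)
    (w : Fin k → ZMod 3) :
    ∑ χ : Fin k → ZMod 3, AddChar.zmodChar 3 hζ.pow_eq_one (χ ⬝ᵥ w) =
      if w = 0 then (3 : K) ^ k else 0 := by
  split_ifs with h
  · subst h; simp
  · obtain ⟨j, hj⟩ := Function.ne_iff.1 h
    let ψ : AddChar (Fin k → ZMod 3) K :=
      { toFun := fun χ => AddChar.zmodChar 3 hζ.pow_eq_one (χ ⬝ᵥ w)
        map_zero_eq_one' := by simp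
        map_add_eq_mul' := fun x y => by rw [add_dotProduct, AddChar.map_add_eq_mul] }
    have hψ : ψ ≠ 0 := by
      intro h0
      have h1 : ψ (Pi.single j (w j)⁻¹) = 1 := by rw [h0]; simp
      have h2 : ψ (Pi.single j (w j)⁻¹) = ζ := by
        change AddChar.zmodChar 3 hζ.pow_eq_one _ = ζ
        rw [single_dotProduct, inv_mul_cancel₀ hj, AddChar.zmodChar_apply]
        exact pow_one ζ
      rw [h2] at h1
      exact hζ.ne_one (by norm_num) h1
    exact AddChar.sum_eq_zero_iff_ne_zero.2 hψ

lemma partA3 {K : Type*} [Field K] [Algebra ℚ K] (hK : Module.finrank ℚ K = 2)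
    {ζ : K} (hζ : IsPrimitiveRoot ζ 3)
    (k : Fin 3 → ℕ) (h₁ : k 0 > k 1) (h₂ : k 1 > k 2)
    (P : (Σ b : Fin 3, (Fin (k b) → ZMod 3)) → MvPolynomial (Σ b : Fin 3, (Fin (k b) → ZMod 3)) ℚ)
    (hne : ∃ i, P i ≠ 0)
    (hP : ∀ (σ : Equiv.Perm (Σ b : Fin 3, (Fin (k b) → ZMod 3))) i, rename σ (P i) = P (σ i))
    (hs : ∑ i, P i = 0) (hs3 : ∑ i, P i ^ 3 = 0) : False := by
  classical
  have hchar : CharZero K := algebraRat.charZero K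
  obtain ⟨e, he⟩ : ∃ e : AddChar (ZMod 3) K, e = AddChar.zmodChar 3 hζ.pow_eq_one := ⟨_, rfl⟩
  have he3 : ∀ x, e x ^ 3 = 1 := by
    intro x; rw [he, AddChar.zmodChar_apply, ← pow_mul, mul_comm, pow_mul, hζ.pow_eq_one, one_pow]
  have orth := fun k w => char_orth hζ k w
  rw [← he] at orth
  let Ψ : MvPolynomial (Σ b : Fin 3, (Fin (k b) → ZMod 3)) ℚ →ₐ[ℚ]
      MvPolynomial (Σ b : Fin 3, (Fin (k b) → ZMod 3)) K :=
    aeval (fun i => ∑ χ : Fin (k i.1) → ZMod 3, C (e (χ ⬝ᵥ i.2)) * X ⟨i.1, χ⟩)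
  let Φ : MvPolynomial (Σ b : Fin 3, (Fin (k b) → ZMod 3)) K →ₐ[K]
      MvPolynomial (Σ b : Fin 3, (Fin (k b) → ZMod 3)) K :=
    aeval (fun i => ∑ w : Fin (k i.1) → ZMod 3, C (e (-(i.2 ⬝ᵥ w)) * (3 ^ (k i.1))⁻¹) * X ⟨i.1, w⟩)
  have hΨX : ∀ b w, Ψ (X ⟨b, w⟩) = ∑ χ : Fin (k b) → ZMod 3, C (e (χ ⬝ᵥ w)) * X ⟨b, χ⟩ := by
    intro b w; simp [Ψ]
  have hΦX : ∀ b χ, Φ (X ⟨b, χ⟩) =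
      ∑ w : Fin (k b) → ZMod 3, C (e (-(χ ⬝ᵥ w)) * (3 ^ (k b))⁻¹) * X ⟨b, w⟩ := by
    intro b w; simp only [Φ, aeval_X]
  have hinv : ∀ p, Φ (Ψ p) = mapAlgHom (Algebra.ofId ℚ K) p := by
    intro p
    have : (Φ.restrictScalars ℚ).comp Ψ = mapAlgHom (Algebra.ofId ℚ K) := by
      apply MvPolynomial.algHom_ext
      rintro ⟨b, w⟩
      rw [AlgHom.comp_apply, AlgHom.restrictScalars_apply, hΨX, map_sum]
      have h1 : ∀ χ : Fin (k b) → ZMod 3, Φ (C (e (χ ⬝ᵥ w)) * X ⟨b, χ⟩) =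
          ∑ w' : Fin (k b) → ZMod 3,
            C (e (χ ⬝ᵥ (w - w')) * (3 ^ (k b))⁻¹) * X ⟨b, w'⟩ := by
        intro χ
        rw [map_mul, hΦX, Finset.mul_sum, ← algebraMap_eq, AlgHom.commutes, algebraMap_eq]
        refine Finset.sum_congr rfl fun w' _ => ?_
        rw [← mul_assoc, ← C_mul, ← mul_assoc, ← AddChar.map_add_eq_mul, dotProduct_sub,
          sub_eq_add_neg]
      rw [Finset.sum_congr rfl fun χ _ => h1 χ, Finset.sum_comm]
      rw [Finset.sum_eq_single w]
      · rw [← Finset.sum_mul, ← map_sum, ← Finset.sum_mul, orth, if_pos (sub_self w),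
          mul_inv_cancel₀ (pow_ne_zero _ (by norm_num))]
        simp
      · intro w' _ hw'
        rw [← Finset.sum_mul, ← map_sum, ← Finset.sum_mul, orth,
          if_neg (sub_ne_zero.2 (Ne.symm hw'))]
        simp
      · simp
    rw [← this]; rfl
  have hinj : ∀ p, Ψ p = 0 → p = 0 := by
    intro p hp
    have := hinv p
    rw [hp, map_zero] at this
    apply map_injective (algebraMap ℚ K) (algebraMap ℚ K).injective
    rw [map_zero]
    exact this.symm
  obtain ⟨i₀, hi₀⟩ := hne
  obtain ⟨m, hm1, hm2, hm3⟩ := lead_aux (fun i => Ψ (P i))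
    ⟨i₀, fun h => hi₀ (hinj _ h)⟩ (by rw [← map_sum, hs, map_zero])
    (by simp only [← map_pow]; rw [← map_sum, hs3, map_zero])
  -- shifts
  let τ : (∀ b, Fin (k b) → ZMod 3) → Equiv.Perm (Σ b : Fin 3, (Fin (k b) → ZMod 3)) :=
    fun v => Equiv.sigmaCongrRight (fun b => Equiv.addRight (v b))
  have hτ : ∀ v b w, τ v ⟨b, w⟩ = ⟨b, w + v b⟩ := fun v b w => rfl
  have hshift : ∀ (v : ∀ b, Fin (k b) → ZMod 3) p, Ψ (rename (τ v) p) =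
      aeval (fun i : (Σ b : Fin 3, (Fin (k b) → ZMod 3)) =>
        C (e (i.2 ⬝ᵥ v i.1)) * (X i : MvPolynomial (Σ b : Fin 3, (Fin (k b) → ZMod 3)) K)) (Ψ p) := by
    intro v p
    have : Ψ.comp (rename (τ v)) = ((aeval (fun i : (Σ b : Fin 3, (Fin (k b) → ZMod 3)) =>
        C (e (i.2 ⬝ᵥ v i.1)) * (X i : MvPolynomial (Σ b : Fin 3, (Fin (k b) → ZMod 3)) K)) :
        _ →ₐ[K] _).restrictScalars ℚ).comp Ψ := by
      apply MvPolynomial.algHom_ext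
      rintro ⟨b, w⟩
      rw [AlgHom.comp_apply, AlgHom.comp_apply, rename_X, hτ, hΨX, hΨX,
        AlgHom.restrictScalars_apply, map_sum]
      refine Finset.sum_congr rfl fun χ _ => ?_
      rw [map_mul, aeval_X, ← algebraMap_eq, AlgHom.commutes, algebraMap_eq, ← mul_assoc, ← C_mul,
        ← AddChar.map_add_eq_mul, dotProduct_add]
    exact congrArg (fun f => f p) this
  let Z : (∀ b, Fin (k b) → ZMod 3) → K := fun v => m.prod fun i n => e (i.2 ⬝ᵥ v i.1) ^ n
  have hZ3 : ∀ v, Z v ^ 3 = 1 := by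
    intro v
    simp only [Z, Finsupp.prod]
    rw [← Finset.prod_pow]
    apply Finset.prod_eq_one
    intro i _
    rw [← pow_mul, mul_comm, pow_mul, he3, one_pow]
  have hc : ∀ v b w, coeff m (Ψ (P ⟨b, w + v b⟩)) = Z v * coeff m (Ψ (P ⟨b, w⟩)) := by
    intro v b w
    rw [← hτ, ← hP, hshift, coeff_scale]
  refine partA4 hK k h₁ h₂ (fun i => coeff m (Ψ (P i))) hm1
    (fun b v => Z (Pi.single b v)) (fun b v => hZ3 _) ?_ ?_ hm2 hm3
  · intro b v w
    have := hc (Pi.single b v) b w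
    rwa [Pi.single_eq_same] at this
  · intro b v b' w hb
    have := hc (Pi.single b v) b' w
    rwa [Pi.single_eq_of_ne hb, add_zero] at this
end HJ
end

section
namespace HJ
open MvPolynomial

lemma partA2 (k₁ k₂ k₃ : ℕ) (h₁ : k₁ > k₂) (h₂ : k₂ > k₃) (n : ℕ)
    (hn : n = 3 ^ k₁ + 3 ^ k₂ + 3 ^ k₃)
    (P : Fin n → MvPolynomial (Fin n) ℚ)
    (hne : ∃ i, P i ≠ 0)
    (hP : ∀ (σ : Equiv.Perm (Fin n)) i, rename σ (P i) = P (σ i))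
    (hs : ∑ i, P i = 0) (hs3 : ∑ i, P i ^ 3 = 0) : False := by
  have h1 : IsCyclotomicExtension {3} ℚ (CyclotomicField 3 ℚ) := by
    have h := CyclotomicField.isCyclotomicExtension 3 ℚ
    have e : (DivisionRing.toRatAlgebra : Algebra ℚ (CyclotomicField 3 ℚ)) =
      CyclotomicField.algebra 3 ℚ := Subsingleton.elim _ _
    rw [e]; exact h
  have hK : Module.finrank ℚ (CyclotomicField 3 ℚ) = 2 := by
    rw [IsCyclotomicExtension.finrank (n := 3) (CyclotomicField 3 ℚ)
      (Polynomial.cyclotomic.irreducible_rat (by norm_num))]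
    rfl
  have hz := IsCyclotomicExtension.zeta_spec 3 ℚ (CyclotomicField 3 ℚ)
  have hcard : Fintype.card (Fin n) =
      Fintype.card (Σ b : Fin 3, (Fin ((![k₁, k₂, k₃] : Fin 3 → ℕ) b) → ZMod 3)) := by
    rw [Fintype.card_sigma, Fin.sum_univ_three]
    simp only [← Nat.card_eq_fintype_card]
    simp [hn]
  let e := Fintype.equivOfCardEq hcard
  refine partA3 hK hz ![k₁, k₂, k₃] h₁ h₂ (fun i => rename e (P (e.symm i))) ?_ ?_ ?_ ?_
  · obtain ⟨i, hi⟩ := hne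
    refine ⟨e i, ?_⟩
    rw [e.symm_apply_apply]
    exact fun h => hi (rename_injective e e.injective (by rw [h, map_zero]))
  · intro σ i
    have h := hP ((e.trans σ).trans e.symm) (e.symm i)
    simp only [Equiv.trans_apply, Equiv.apply_symm_apply] at h
    rw [← h, rename_rename, rename_rename]
    congr 2
    funext j
    simp
  · rw [← map_sum, Equiv.sum_comp e.symm P, hs, map_zero]
  · simp only [← map_pow]
    rw [← map_sum, Equiv.sum_comp e.symm (fun i => P i ^ 3), hs3, map_zero]
end HJ
end

section
namespace HJ
open GenExt MvPolynomial

lemma permAut_algebraMap (n : ℕ) (σ : Equiv.Perm (Fin n)) (p : MvPolynomial (Fin n) ℚ) :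
    permAut n σ (algebraMap _ (L n) p) = algebraMap _ (L n) (rename σ p) :=
  IsFractionRing.ringEquivOfRingEquiv_algebraMap _ p

lemma permAut_mul (n : ℕ) (σ τ : Equiv.Perm (Fin n)) (x : L n) :
    permAut n (σ * τ) x = permAut n σ (permAut n τ x) := by
  obtain ⟨a, b, -, rfl⟩ := IsFractionRing.div_surjective (MvPolynomial (Fin n) ℚ) x
  simp only [map_div₀, permAut_algebraMap, rename_rename]
  rfl

lemma permAut_one (n : ℕ) (x : L n) : permAut n 1 x = x := by
  obtain ⟨a, b, -, rfl⟩ := IsFractionRing.div_surjective (MvPolynomial (Fin n) ℚ) x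
  simp only [map_div₀, permAut_algebraMap]
  congr 1
  · congr 1; exact rename_id_apply a
  · congr 1; exact rename_id_apply b

lemma trace_sum (n : ℕ) (δ : E n) (h : Algebra.trace (F n) (E n) δ = 0) :
    ∑ σ : Equiv.Perm (Fin n), permAut n σ (δ : L n) = 0 := by
  let act : MulSemiringAction (Equiv.Perm (Fin n)) (L n) :=
    { smul := fun σ x => permAut n σ x
      one_smul := permAut_one n
      mul_smul := permAut_mul n
      smul_zero := fun σ => map_zero _
      smul_add := fun σ => map_add _
      smul_one := fun σ => map_one _
      smul_mul := fun σ => map_mul _ }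
  have hsm : ∀ (σ : Equiv.Perm (Fin n)) (x : L n), σ • x = permAut n σ x := fun _ _ => rfl
  have gal : IsGaloisGroup (Equiv.Perm (Fin n)) (F n) (L n) :=
    { faithful := ⟨fun {σ τ} hστ => by
        ext i
        have := hστ (algebraMap (MvPolynomial (Fin n) ℚ) (L n) (X i))
        rw [hsm, hsm, permAut_algebraMap, permAut_algebraMap, rename_X, rename_X] at this
        rw [X_injective (IsFractionRing.injective (MvPolynomial (Fin n) ℚ) (L n) this)]⟩
      commutes := ⟨fun σ a x => by
        rw [hsm, hsm, Subfield.smul_def, Subfield.smul_def, smul_eq_mul, smul_eq_mul, map_mul,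
          a.2 σ (Set.mem_univ σ)]⟩
      isInvariant := ⟨fun x hx => ⟨⟨x, fun σ _ => hx σ⟩, rfl⟩⟩ }
  have : IsGalois (F n) (L n) := IsGaloisGroup.isGalois (Equiv.Perm (Fin n)) (F n) (L n)
  have : FiniteDimensional (F n) (L n) :=
    IsGaloisGroup.finiteDimensional (Equiv.Perm (Fin n)) (F n) (L n)
  have : IsScalarTower (F n) (E n) (L n) := IsScalarTower.of_algebraMap_eq fun _ => rfl
  have : FiniteDimensional (F n) (E n) := FiniteDimensional.left (F n) (E n) (L n)
  have : FiniteDimensional (E n) (L n) := FiniteDimensional.right (F n) (E n) (L n)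
  have h1 := Algebra.trace_trace (R := F n) (S := E n) (T := L n) (algebraMap (E n) (L n) δ)
  rw [Algebra.trace_algebraMap, map_nsmul, h, smul_zero] at h1
  have h2 := trace_eq_sum_automorphisms (K := F n) (algebraMap (E n) (L n) δ)
  rw [← h1, map_zero] at h2
  rw [h2]
  exact Fintype.sum_equiv
    (IsGaloisGroup.mulEquivAlgEquiv (Equiv.Perm (Fin n)) (F n) (L n)).toEquiv _ _ (fun σ => rfl)

lemma sum_perm_aux {A : Type*} [AddCommGroup A] [IsAddTorsionFree A] (n : ℕ) (z : Fin n)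
    (f : Fin n → A) (h : ∑ σ : Equiv.Perm (Fin n), f (σ z) = 0) : ∑ i, f i = 0 := by
  have h1 : ∀ j, ∑ σ : Equiv.Perm (Fin n), f (σ j) = 0 := by
    intro j
    rw [← h]
    refine Fintype.sum_equiv (Equiv.mulRight (Equiv.swap z j)) _ _ fun σ => ?_
    simp
  have h2 : ∑ σ : Equiv.Perm (Fin n), ∑ j, f (σ j) = 0 := by
    rw [Finset.sum_comm]; exact Finset.sum_eq_zero fun j _ => h1 j
  simp only [Equiv.sum_comp, Finset.sum_const] at h2
  refine (smul_eq_zero_iff_right ?_).1 h2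
  simp [Finset.card_univ, Fintype.card_perm, Nat.factorial_ne_zero]

lemma main (k₁ k₂ k₃ : ℕ) (h₁ : k₁ > k₂) (h₂ : k₂ > k₃) (n : ℕ)
    (hn : n = 3 ^ k₁ + 3 ^ k₂ + 3 ^ k₃) (δ : E n) (hδ : δ ≠ 0)
    (ht : Algebra.trace (F n) (E n) δ = 0) (ht3 : Algebra.trace (F n) (E n) (δ ^ 3) = 0) :
    False := by
  have hpos : 0 < n := by rw [hn]; positivity
  obtain ⟨z, hz⟩ : ∃ z : Fin n, (z : ℕ) = 0 := ⟨⟨0, hpos⟩, rfl⟩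
  have inj := IsFractionRing.injective (MvPolynomial (Fin n) ℚ) (L n)
  have s1 := trace_sum n δ ht
  have s3 := trace_sum n _ ht3
  rw [SubmonoidClass.coe_pow] at s3
  have hd0 : (δ : L n) ≠ 0 := fun h => hδ (Subtype.ext h)
  have hfix : ∀ σ : Equiv.Perm (Fin n), σ z = z → permAut n σ (δ : L n) = δ := by
    intro σ hσ
    refine δ.2 σ fun i hi => ?_
    have : i = z := Fin.ext (by rw [hi, hz])
    rw [this, hσ]
  generalize (δ : L n) = d at *
  obtain ⟨a, b, hb, rfl⟩ := IsFractionRing.div_surjective (MvPolynomial (Fin n) ℚ) d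
  have hb0 : b ≠ 0 := nonZeroDivisors.ne_zero hb
  obtain ⟨D, hD⟩ : ∃ D, D = ∏ σ : Equiv.Perm (Fin n), rename σ b := ⟨_, rfl⟩
  have hD0 : D ≠ 0 := by
    rw [hD, Finset.prod_ne_zero_iff]
    intro σ _ h
    exact hb0 (rename_injective σ σ.injective (by rw [h, map_zero]))
  have hDinv : ∀ τ : Equiv.Perm (Fin n), rename τ D = D := by
    intro τ
    rw [hD, map_prod]
    refine Fintype.prod_equiv (Equiv.mulLeft τ) _ _ fun σ => ?_
    rw [rename_rename]; rfl
  obtain ⟨q, hq⟩ : ∃ q, D = b * q := by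
    have : rename (1 : Equiv.Perm (Fin n)) b ∣ D := by
      rw [hD]; exact Finset.dvd_prod_of_mem _ (Finset.mem_univ _)
    rwa [show rename (1 : Equiv.Perm (Fin n)) b = b from rename_id_apply b] at this
  obtain ⟨p, hp⟩ : ∃ p, p = a * q := ⟨_, rfl⟩
  have hpD : algebraMap _ (L n) p =
      algebraMap _ (L n) D * (algebraMap _ (L n) a / algebraMap _ (L n) b) := by
    have : algebraMap _ (L n) b ≠ 0 := fun h => hb0 (inj (by rw [h, map_zero]))
    rw [hp, hq, map_mul, map_mul]
    field_simp
  have hperm : ∀ σ : Equiv.Perm (Fin n), algebraMap _ (L n) (rename σ p) =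
      algebraMap _ (L n) D * permAut n σ (algebraMap _ (L n) a / algebraMap _ (L n) b) := by
    intro σ
    rw [← permAut_algebraMap, hpD, map_mul, permAut_algebraMap, hDinv]
  have hp0 : p ≠ 0 := by
    intro h
    rw [h, map_zero] at hpD
    exact mul_ne_zero (fun h => hD0 (inj (by rw [h, map_zero]))) hd0 hpD.symm
  have hpfix : ∀ σ : Equiv.Perm (Fin n), σ z = z → rename σ p = p := by
    intro σ hσ
    apply inj
    rw [hperm, hfix σ hσ, hpD]
  have hp1 : ∑ σ : Equiv.Perm (Fin n), rename σ p = 0 := by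
    apply inj
    rw [map_sum, map_zero]
    simp only [hperm]
    rw [← Finset.mul_sum, s1, mul_zero]
  have hp3 : ∑ σ : Equiv.Perm (Fin n), rename σ p ^ 3 = 0 := by
    apply inj
    rw [map_sum, map_zero]
    simp only [map_pow, hperm, mul_pow]
    simp only [map_pow] at s3
    rw [← Finset.mul_sum, s3, mul_zero]
  obtain ⟨P, hP⟩ : ∃ P : Fin n → MvPolynomial (Fin n) ℚ,
      P = fun i => rename (Equiv.swap z i) p := ⟨_, rfl⟩
  have hren : ∀ σ : Equiv.Perm (Fin n), rename σ p = P (σ z) := by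
    intro σ
    have h := hpfix (Equiv.swap z (σ z) * σ) (by simp)
    rw [hP]
    beta_reduce
    conv_rhs => rw [← h]
    rw [rename_rename]
    congr 2
    ext j
    simp
  have hPσ : ∀ (σ : Equiv.Perm (Fin n)) i, rename σ (P i) = P (σ i) := by
    intro σ i
    have h := hren (σ * Equiv.swap z i)
    rw [Equiv.Perm.mul_apply, Equiv.swap_apply_left] at h
    rw [← h, hP, rename_rename]
    rfl
  simp only [hren] at hp1 hp3
  refine partA2 k₁ k₂ k₃ h₁ h₂ n hn P ⟨z, ?_⟩ hPσ (sum_perm_aux n z P hp1)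
    (sum_perm_aux n z (fun i => P i ^ 3) hp3)
  rw [hP]
  exact fun h => hp0 (rename_injective _ (Equiv.swap z z).injective (by rw [map_zero]; exact h))
end HJ
end

/-- **Theorem 1.2 (precise form over ℚ):** for `n = 3^k₁ + 3^k₂ + 3^k₃` with
`k₁ > k₂ > k₃ ≥ 0`, the general field extension `Eₙ/Fₙ` of degree `n` over `ℚ` contains no
nonzero element `δ` with `Tr_{Eₙ/Fₙ}(δ) = Tr_{Eₙ/Fₙ}(δ³) = 0`. -/
theorem no_traceZero_cube_traceZero_in_general_extension
    (k₁ k₂ k₃ : ℕ) (h₁ : k₁ > k₂) (h₂ : k₂ > k₃) (n : ℕ)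
    (hn : n = 3 ^ k₁ + 3 ^ k₂ + 3 ^ k₃) :
    ¬ ∃ δ : GenExt.E n, δ ≠ 0 ∧
      Algebra.trace (GenExt.F n) (GenExt.E n) δ = 0 ∧
      Algebra.trace (GenExt.F n) (GenExt.E n) (δ ^ 3) = 0 := by
  rintro ⟨δ, hδ, ht, ht3⟩
  exact HJ.main k₁ k₂ k₃ h₁ h₂ n hn δ hδ ht ht3

end
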